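/- arXiv:1011.1044 — 7 statements merged into one kernel-verified Lean document; each statement's English description precedes it below -/
import Mathlib

section
/- Let A = {A_0,…,A_d} be an association scheme on a finite vertex set V and let n ≥ 1. Then the matrices A_α of H(n,A), as α ranges over all vectors of d+1 nonnegative integers summing to n, form an association scheme on the vertex set V^n: A_{(n,0,…,0)} is the identity matrix; the sum of all A_α is the all-ones matrix; the transpose of each A_α is again some A_{α'}; any product A_α·A_{α'} is a linear combination of the matrices A_{α''}; and any two of the matrices A_α commute. -/
open Matrix Finset MvPolynomial

/-- An association scheme with `d` classes on the finite vertex set `V`. -/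
structure AssocScheme (d : ℕ) (V : Type) [Fintype V] [DecidableEq V] : Type where
  A : Fin (d + 1) → Matrix V V ℂ
  entries_zero_or_one : ∀ i x y, A i x y = 0 ∨ A i x y = 1
  A_zero : A 0 = 1
  A_sum : ∑ i, A i = Matrix.of fun _ _ => 1
  transpose_mem : ∀ i, ∃ j, (A i)ᵀ = A j
  mul_eq_lin_comb : ∀ i j, ∃ p : Fin (d + 1) → ℂ, A i * A j = ∑ k, p k • A k
  mul_comm' : ∀ i j, A i * A j = A j * A i

open Classical in
/-- `h(x,y)`: the vector whose `r`-th entry counts coordinates `j` with `(A_r)_{x_j,y_j} = 1`. -/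
noncomputable def AssocScheme.profile {d : ℕ} {V : Type} [Fintype V] [DecidableEq V]
    (S : AssocScheme d V) (n : ℕ) (x y : Fin n → V) : Fin (d + 1) → ℕ :=
  fun r => (Finset.univ.filter fun j : Fin n => S.A r (x j) (y j) = 1).card

open Classical in
/-- The matrix `A_α` of the generalized Hamming scheme `H(n,A)`. -/
noncomputable def AssocScheme.ham {d : ℕ} {V : Type} [Fintype V] [DecidableEq V]
    (S : AssocScheme d V) (n : ℕ) (α : Fin (d + 1) → ℕ) :
    Matrix (Fin n → V) (Fin n → V) ℂ :=
  Matrix.of fun x y => if S.profile n x y = α then 1 else 0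

/-!
The relations of the scheme partition `V × V`, so each pair `(x, y)` has a class `rel x y`, and
`profile n x y` records how often each class occurs among the pairs `(x j, y j)`; two pairs of words
therefore have the same profile exactly when their class sequences differ by a permutation of the
coordinates. The intersection numbers and commutativity of the scheme are counts of triangles
`x, z, y`, so each amounts to a bijection of `V` moving the middle vertex `z`. Applying such
bijections coordinatewise gives bijections of `V ^ n` that match the terms of the matrix products
in the Hamming scheme. A matrix is a linear combination of the `A_α` as soon as its entries depend
only on the profile.
-/

theorem exists_equiv_of_card_fiber_eq {X Y K : Type*} [Fintype X] [Fintype Y] [DecidableEq K]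
    {f : X → K} {g : Y → K} (h : ∀ k, #{x | f x = k} = #{y | g y = k}) :
    ∃ e : X ≃ Y, ∀ x, g (e x) = f x := by
  have fiber_equiv : ∀ k, Nonempty ({x // f x = k} ≃ {y // g y = k}) := fun k =>
    Fintype.card_eq.mp (by simpa only [Fintype.card_subtype] using h k)
  exact ⟨Equiv.ofFiberEquiv fun k => (fiber_equiv k).some, Equiv.ofFiberEquiv_map _⟩

namespace AssocScheme

variable {V : Type} [Fintype V] [DecidableEq V] {d : ℕ} (S : AssocScheme d V)

theorem existsUnique_A_apply_eq_one (x y : V) : ∃! i, S.A i x y = 1 := by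
  have sum_eq_one : ∑ i, S.A i x y = 1 := by
    simpa only [Matrix.sum_apply, Matrix.of_apply] using congrFun₂ S.A_sum x y
  have A_eq_ite : ∀ i, S.A i x y = if S.A i x y = 1 then 1 else 0 := fun i => by
    rcases S.entries_zero_or_one i x y with h | h <;> simp [h]
  have card_eq_one : #{i | S.A i x y = 1} = 1 := by
    rw [Finset.sum_congr rfl fun i _ => A_eq_ite i, Finset.sum_boole] at sum_eq_one
    exact_mod_cast sum_eq_one
  simpa only [Finset.singleton_iff_unique_mem, Finset.mem_filter_univ] using
    Finset.card_eq_one.mp card_eq_one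

/-- The class of the pair `(x, y)`: the index `i` of the unique relation of the scheme containing
it, i.e. with `S.A i x y = 1`. -/
noncomputable def rel (x y : V) : Fin (d + 1) :=
  (S.existsUnique_A_apply_eq_one x y).choose

theorem A_apply_eq_one_iff {i : Fin (d + 1)} {x y : V} : S.A i x y = 1 ↔ S.rel x y = i := by
  obtain ⟨rel_spec, rel_unique⟩ := (S.existsUnique_A_apply_eq_one x y).choose_spec
  exact ⟨fun h => (rel_unique i h).symm, fun h => h ▸ rel_spec⟩

theorem A_apply (i : Fin (d + 1)) (x y : V) : S.A i x y = if S.rel x y = i then 1 else 0 := by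
  split_ifs with h
  · exact S.A_apply_eq_one_iff.mpr h
  · exact (S.entries_zero_or_one i x y).resolve_right (mt S.A_apply_eq_one_iff.mp h)

theorem rel_eq_zero_iff {x y : V} : S.rel x y = 0 ↔ x = y := by
  simp [← S.A_apply_eq_one_iff, S.A_zero, Matrix.one_apply]

theorem exists_rel_swap_eq :
    ∃ σ : Fin (d + 1) → Fin (d + 1), ∀ x y, S.rel y x = σ (S.rel x y) := by
  choose σ hσ using S.transpose_mem
  refine ⟨σ, fun x y => S.A_apply_eq_one_iff.mp ?_⟩
  rw [← hσ, Matrix.transpose_apply, S.A_apply_eq_one_iff]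

theorem A_mul_A_apply (i j : Fin (d + 1)) (x y : V) :
    (S.A i * S.A j) x y = #{z | (S.rel x z, S.rel z y) = (i, j)} := by
  simp only [Matrix.mul_apply, A_apply, mul_ite_zero, mul_one, ← ite_and, Finset.sum_boole,
    Prod.mk.injEq, and_comm]

theorem exists_perm_rel_eq_of_rel_eq {x y x' y' : V} (h : S.rel x y = S.rel x' y') :
    ∃ e : Equiv.Perm V, ∀ z, S.rel x' (e z) = S.rel x z ∧ S.rel (e z) y' = S.rel z y := by
  have card_eq : ∀ k, #{z | (S.rel x z, S.rel z y) = k} = #{z | (S.rel x' z, S.rel z y') = k} := by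
    rintro ⟨i, j⟩
    obtain ⟨p, hp⟩ := S.mul_eq_lin_comb i j
    have mul_apply_eq : (S.A i * S.A j) x y = (S.A i * S.A j) x' y' := by
      simp only [hp, Matrix.sum_apply, Matrix.smul_apply, A_apply, h]
    rwa [A_mul_A_apply, A_mul_A_apply, Nat.cast_inj] at mul_apply_eq
  simpa only [Prod.mk.injEq] using exists_equiv_of_card_fiber_eq card_eq

theorem exists_perm_rel_eq_swap (x y : V) :
    ∃ e : Equiv.Perm V, ∀ z, S.rel x (e z) = S.rel z y ∧ S.rel (e z) y = S.rel x z := by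
  have card_eq : ∀ k, #{z | (S.rel z y, S.rel x z) = k} = #{z | (S.rel x z, S.rel z y) = k} := by
    rintro ⟨i, j⟩
    have mul_apply_eq : (S.A j * S.A i) x y = (S.A i * S.A j) x y := by rw [S.mul_comm']
    rw [A_mul_A_apply, A_mul_A_apply, Nat.cast_inj] at mul_apply_eq
    simpa only [Prod.mk.injEq, and_comm] using mul_apply_eq
  simpa only [Prod.mk.injEq] using exists_equiv_of_card_fiber_eq card_eq

variable {n : ℕ}

theorem profile_apply (x y : Fin n → V) (r : Fin (d + 1)) :
    S.profile n x y r = #{j | S.rel (x j) (y j) = r} := by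
  simp only [profile, A_apply_eq_one_iff]

theorem profile_mem_antidiagonalTuple (x y : Fin n → V) :
    S.profile n x y ∈ Finset.Nat.antidiagonalTuple (d + 1) n := by
  rw [Finset.Nat.mem_antidiagonalTuple]
  simp_rw [profile_apply]
  rw [← Finset.card_eq_sum_card_fiberwise fun _ _ => Finset.mem_coe.mpr (Finset.mem_univ _),
    Finset.card_univ, Fintype.card_fin]

theorem profile_eq_profile_iff {x y x' y' : Fin n → V} :
    S.profile n x y = S.profile n x' y' ↔
      ∃ π : Equiv.Perm (Fin n), ∀ j, S.rel (x (π j)) (y (π j)) = S.rel (x' j) (y' j) := by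
  simp only [funext_iff, profile_apply]
  constructor
  · exact fun h => exists_equiv_of_card_fiber_eq fun r => (h r).symm
  · rintro ⟨π, hπ⟩ r
    exact (Finset.card_equiv π fun j => by simp only [Finset.mem_filter_univ, hπ]).symm

theorem profile_swap_eq_profile_swap_iff {x y x' y' : Fin n → V} :
    S.profile n y x = S.profile n y' x' ↔ S.profile n x y = S.profile n x' y' := by
  suffices swap : ∀ {x y x' y' : Fin n → V},
      S.profile n x y = S.profile n x' y' → S.profile n y x = S.profile n y' x' from ⟨swap, swap⟩
  intro x y x' y' h
  obtain ⟨σ, hσ⟩ := S.exists_rel_swap_eq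
  obtain ⟨π, hπ⟩ := S.profile_eq_profile_iff.mp h
  exact S.profile_eq_profile_iff.mpr ⟨π, fun j => by rw [hσ (x (π j)), hσ (x' j), hπ]⟩

theorem profile_eq_ite_zero_iff {x y : Fin n → V} :
    S.profile n x y = (fun i => if i = 0 then n else 0) ↔ x = y := by
  constructor
  · intro h
    have card_eq : #{j | S.rel (x j) (y j) = 0} = Fintype.card (Fin n) := by
      simpa only [profile_apply, if_true, Fintype.card_fin] using congrFun h 0
    have rel_eq_zero : ∀ j, S.rel (x j) (y j) = 0 := by
      simpa only [Finset.card_eq_iff_eq_univ, Finset.filter_eq_self, Finset.mem_univ,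
        true_imp_iff] using card_eq
    exact funext fun j => S.rel_eq_zero_iff.mp (rel_eq_zero j)
  · rintro rfl
    funext r
    have rel_self : ∀ v, S.rel v v = 0 := fun v => S.rel_eq_zero_iff.mpr rfl
    by_cases hr : r = 0 <;> simp [profile_apply, rel_self, hr, eq_comm]

theorem exists_perm_profile_eq_of_profile_eq {x y x' y' : Fin n → V}
    (h : S.profile n x y = S.profile n x' y') :
    ∃ e : Equiv.Perm (Fin n → V), ∀ z,
      S.profile n x' (e z) = S.profile n x z ∧ S.profile n (e z) y' = S.profile n z y := by
  obtain ⟨π, hπ⟩ := S.profile_eq_profile_iff.mp h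
  choose e he using fun j => S.exists_perm_rel_eq_of_rel_eq (hπ j)
  refine ⟨(π.symm.arrowCongr (.refl V)).trans (.piCongrRight e), fun z => ⟨?_, ?_⟩⟩
  · exact (S.profile_eq_profile_iff.mpr ⟨π, fun j => (he j (z (π j))).1.symm⟩).symm
  · exact (S.profile_eq_profile_iff.mpr ⟨π, fun j => (he j (z (π j))).2.symm⟩).symm

theorem exists_perm_profile_eq_swap (x y : Fin n → V) :
    ∃ e : Equiv.Perm (Fin n → V), ∀ z,
      S.profile n x (e z) = S.profile n z y ∧ S.profile n (e z) y = S.profile n x z := by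
  choose e he using fun j => S.exists_perm_rel_eq_swap (x j) (y j)
  refine ⟨.piCongrRight e, fun z => ⟨?_, ?_⟩⟩
  · exact S.profile_eq_profile_iff.mpr ⟨1, fun j => (he j (z j)).1⟩
  · exact S.profile_eq_profile_iff.mpr ⟨1, fun j => (he j (z j)).2⟩

theorem ham_apply (α : Fin (d + 1) → ℕ) (x y : Fin n → V) :
    S.ham n α x y = if S.profile n x y = α then 1 else 0 := by
  simp only [ham, Matrix.of_apply]

theorem ham_ite_zero : S.ham n (fun i => if i = 0 then n else 0) = 1 := by
  ext x y
  simp only [ham_apply, Matrix.one_apply, profile_eq_ite_zero_iff]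

theorem sum_smul_ham_apply (p : (Fin (d + 1) → ℕ) → ℂ) (x y : Fin n → V) :
    (∑ α ∈ Finset.Nat.antidiagonalTuple (d + 1) n, p α • S.ham n α) x y =
      p (S.profile n x y) := by
  simp only [Matrix.sum_apply, Matrix.smul_apply, ham_apply, smul_eq_mul, mul_ite, mul_one,
    mul_zero, Finset.sum_ite_eq, S.profile_mem_antidiagonalTuple, if_true]

theorem sum_ham :
    ∑ α ∈ Finset.Nat.antidiagonalTuple (d + 1) n, S.ham n α = Matrix.of fun _ _ => 1 := by
  ext x y
  simpa only [one_smul, Matrix.of_apply] using S.sum_smul_ham_apply (fun _ => 1) x y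

theorem exists_eq_sum_smul_ham {M : Matrix (Fin n → V) (Fin n → V) ℂ}
    (hM : ∀ {x y x' y'}, S.profile n x y = S.profile n x' y' → M x y = M x' y') :
    ∃ p : (Fin (d + 1) → ℕ) → ℂ,
      M = ∑ α ∈ Finset.Nat.antidiagonalTuple (d + 1) n, p α • S.ham n α := by
  have factors : (Function.uncurry M).FactorsThrough (Function.uncurry (S.profile n)) :=
    fun _ _ h => hM h
  obtain ⟨p, hp⟩ := (Function.factorsThrough_iff _).mp factors
  refine ⟨p, ?_⟩
  ext x y
  rw [sum_smul_ham_apply]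
  exact congrFun hp (x, y)

theorem transpose_ham_profile (x y : Fin n → V) :
    (S.ham n (S.profile n x y))ᵀ = S.ham n (S.profile n y x) := by
  ext u w
  simp only [Matrix.transpose_apply, ham_apply, S.profile_swap_eq_profile_swap_iff (x := u)]

theorem ham_eq_zero {α : Fin (d + 1) → ℕ} (h : ∀ x y, S.profile n x y ≠ α) : S.ham n α = 0 := by
  ext x y
  rw [ham_apply, if_neg (h x y), Matrix.zero_apply]

-- Some `A i` may be zero, so transposition need not come from a permutation of the indices that
-- could be applied to `α`; the new index is read off from a pair of profile `α`, if there is one.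
theorem exists_transpose_ham_eq {α : Fin (d + 1) → ℕ}
    (hα : α ∈ Finset.Nat.antidiagonalTuple (d + 1) n) :
    ∃ α' ∈ Finset.Nat.antidiagonalTuple (d + 1) n, (S.ham n α)ᵀ = S.ham n α' := by
  by_cases attained : ∃ x y, S.profile n x y = α
  · obtain ⟨x, y, rfl⟩ := attained
    exact ⟨_, S.profile_mem_antidiagonalTuple y x, S.transpose_ham_profile x y⟩
  · push Not at attained
    exact ⟨α, hα, by rw [S.ham_eq_zero attained, Matrix.transpose_zero]⟩

theorem ham_mul_ham_apply_congr (α β : Fin (d + 1) → ℕ) {x y x' y' : Fin n → V}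
    (h : S.profile n x y = S.profile n x' y') :
    (S.ham n α * S.ham n β) x y = (S.ham n α * S.ham n β) x' y' := by
  obtain ⟨e, he⟩ := S.exists_perm_profile_eq_of_profile_eq h
  simp only [Matrix.mul_apply, ham_apply]
  exact Fintype.sum_equiv e _ _ fun z => by rw [(he z).1, (he z).2]

theorem ham_mul_comm (α β : Fin (d + 1) → ℕ) : S.ham n α * S.ham n β = S.ham n β * S.ham n α := by
  ext x y
  obtain ⟨e, he⟩ := S.exists_perm_profile_eq_swap x y
  simp only [Matrix.mul_apply, ham_apply]
  exact Fintype.sum_equiv e _ _ fun z => by rw [(he z).1, (he z).2, mul_comm]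

end AssocScheme

/-- The matrices `A_α`, as `α` ranges over vectors of `d+1`
nonnegative integers summing to `n`, form an association scheme on `V^n`. -/
theorem generalizedHamming_isAssocScheme {V : Type} [Fintype V] [DecidableEq V]
    {d : ℕ} (S : AssocScheme d V) (n : ℕ) (hn : 1 ≤ n) :
    (S.ham n (fun i => if i = 0 then n else 0) = 1) ∧
    (∑ α ∈ Finset.Nat.antidiagonalTuple (d + 1) n, S.ham n α
        = Matrix.of fun _ _ => 1) ∧
    (∀ α ∈ Finset.Nat.antidiagonalTuple (d + 1) n,
        ∃ α' ∈ Finset.Nat.antidiagonalTuple (d + 1) n, (S.ham n α)ᵀ = S.ham n α') ∧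
    (∀ α ∈ Finset.Nat.antidiagonalTuple (d + 1) n,
      ∀ α' ∈ Finset.Nat.antidiagonalTuple (d + 1) n,
        ∃ p : (Fin (d + 1) → ℕ) → ℂ,
          S.ham n α * S.ham n α'
            = ∑ α'' ∈ Finset.Nat.antidiagonalTuple (d + 1) n, p α'' • S.ham n α'') ∧
    (∀ α α' : Fin (d + 1) → ℕ, S.ham n α * S.ham n α' = S.ham n α' * S.ham n α) := by
  exact ⟨S.ham_ite_zero, S.sum_ham, fun _ hα => S.exists_transpose_ham_eq hα,
    fun α _ α' _ => S.exists_eq_sum_smul_ham (S.ham_mul_ham_apply_congr α α'), S.ham_mul_comm⟩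
end

section
/- Let A = {A_0,…,A_d} be an association scheme on v vertices with principal idempotents E_0,…,E_d and matrix of eigenvalues P, and let n ≥ 1. For vectors α, β of d+1 nonnegative integers summing to n, let p_α(β) denote the coefficient of the monomial s^α in the polynomial (Ps)^β = Π_{j=0}^{d} (Σ_{i=0}^{d} P_{j,i}·s_i)^{β(j)}. Then A_α = Σ_β p_α(β)·E_β; in particular A_α·E_β = p_α(β)·E_β, so the scalars p_α(β) are the eigenvalues of the generalized Hamming scheme H(n,A), i.e., the matrix of eigenvalues of H(n,A) is the matrix representing the action of P on homogeneous polynomials of degree n in s_0,…,s_d. -/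
open Matrix Finset MvPolynomial

open Classical in
/-- The matrix `E_β` built from the idempotents `E_0, …, E_d`. -/
noncomputable def idemMat {d : ℕ} {V : Type} [Fintype V] [DecidableEq V]
    (E : Fin (d + 1) → Matrix V V ℂ) (n : ℕ) (β : Fin (d + 1) → ℕ) :
    Matrix (Fin n → V) (Fin n → V) ℂ :=
  Matrix.of fun x y =>
    ∑ f ∈ Finset.univ.filter
        (fun f : Fin n → Fin (d + 1) =>
          ∀ r, (Finset.univ.filter fun j => f j = r).card = β r),
      ∏ j, E (f j) (x j) (y j)

/-- `p_α(β)`: the coefficient of the monomial `s^α` in `(Ps)^β`. -/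
noncomputable def hamEigenvalue (d n : ℕ) (P : Matrix (Fin (d + 1)) (Fin (d + 1)) ℂ)
    (α β : Fin (d + 1) → ℕ) : ℂ :=
  MvPolynomial.coeff (Finsupp.equivFunOnFinite.symm α)
    (∏ j : Fin (d + 1),
      (∑ i : Fin (d + 1), MvPolynomial.C (P j i) * MvPolynomial.X i) ^ β j)

/-!
Both `A_α` and `E_β` are instances of one construction: to a family of matrices `M_i` attach, for
each exponent vector `α`, the sum `M_α` of all Kronecker products `M_{f(1)} ⊗ ⋯ ⊗ M_{f(n)}` in which
each `M_r` occurs `α(r)` times, i.e. the coefficient of `s^α` in `(Σ_i s_i M_i)^{⊗ n}`. For the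
matrices of a scheme this is `A_α`, because exactly one `A_r` has a nonzero entry at each position.
Substituting `A_i = Σ_j P_{j,i} E_j` and expanding by multilinearity, the Kronecker product of the
`E_{f(j)}` gets as its coefficient that of `s^α` in the product of the linear forms
`Σ_i P_{f(j),i} s_i`, which is `p_α(β)` for `β` the content of `f`. The Kronecker products of the
`E_j` are again orthogonal idempotents, so these coefficients are eigenvalues.
-/

section Content

variable {ι κ : Type*} [Fintype ι] [DecidableEq κ]

/-- The content of a word `f` over the alphabet `κ` with positions `ι`: how often each letter
occurs in it. -/
def wordContent (f : ι → κ) (r : κ) : ℕ :=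
  #{j | f j = r}

theorem prod_comp_eq_prod_pow_wordContent {M : Type*} [CommMonoid M] [Fintype κ]
    (f : ι → κ) (a : κ → M) : ∏ j, a (f j) = ∏ r, a r ^ wordContent f r := by
  simp only [← Finset.prod_fiberwise' univ f a, prod_const, wordContent]

theorem wordContent_mem_piAntidiag [Fintype κ] (f : ι → κ) :
    wordContent f ∈ piAntidiag univ (Fintype.card ι) := by
  have sum_eq : ∑ r, wordContent f r = Fintype.card ι :=
    (card_eq_sum_card_fiberwise fun j _ => mem_coe.2 (mem_univ (f j))).symm
  exact mem_piAntidiag.2 ⟨sum_eq, fun _ _ => mem_univ _⟩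

end Content

section SymPowerCoeff

variable {ι κ μ R : Type*} [Fintype ι] [Fintype κ] [DecidableEq κ] [CommSemiring R]

theorem coeff_prod_X_comp (g : ι → κ) (α : κ → ℕ) :
    coeff (Finsupp.equivFunOnFinite.symm α) (∏ j, (X (g j) : MvPolynomial κ R)) =
      if wordContent g = α then 1 else 0 := by
  rw [prod_comp_eq_prod_pow_wordContent g X, coeff_prod_X_pow]
  simp [Finsupp.ext_iff, funext_iff, eq_comm]

theorem coeff_prod_toMvPolynomial [DecidableEq ι] (Q : Matrix ι κ R) (α : κ → ℕ) :
    coeff (Finsupp.equivFunOnFinite.symm α) (∏ j, Q.toMvPolynomial j) =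
      ∑ g : ι → κ with wordContent g = α, ∏ j, Q j (g j) := by
  simp only [toMvPolynomial, ← C_mul_X_eq_monomial, Fintype.prod_sum, prod_mul_distrib, ← map_prod,
    coeff_sum, coeff_C_mul, coeff_prod_X_comp, mul_ite, mul_one, mul_zero, sum_filter]

/-- The coefficient of `s^α` in `(Ps)^β`, i.e. the entry at `(β, α)` of the matrix by which the
substitution `P` acts on polynomials in the variables `s_i`. It is `hamEigenvalue` for arbitrary
index types and coefficients; the `j`-th entry of `Ps` is the linear form `P.toMvPolynomial j`. -/
noncomputable def symPowerCoeff [Fintype μ] (P : Matrix μ κ R) (α : κ → ℕ) (β : μ → ℕ) : R :=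
  coeff (Finsupp.equivFunOnFinite.symm α) (∏ j, P.toMvPolynomial j ^ β j)

theorem symPowerCoeff_wordContent [Fintype μ] [DecidableEq μ] [DecidableEq ι]
    (P : Matrix μ κ R) (α : κ → ℕ) (f : ι → μ) :
    symPowerCoeff P α (wordContent f) =
      ∑ g : ι → κ with wordContent g = α, ∏ j, P (f j) (g j) := by
  rw [symPowerCoeff, ← prod_comp_eq_prod_pow_wordContent f P.toMvPolynomial]
  exact coeff_prod_toMvPolynomial (P.submatrix f id) α

end SymPowerCoeff

section PiKronecker

variable {ι κ R : Type*} [Fintype ι] [CommSemiring R] {l m n : ι → Type*}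

/-- The Kronecker product of a finite family of matrices, with rows and columns indexed by
tuples. -/
def piKronecker (M : ∀ j, Matrix (m j) (n j) R) : Matrix (∀ j, m j) (∀ j, n j) R :=
  Matrix.of fun x y => ∏ j, M j (x j) (y j)

theorem piKronecker_smul (c : ι → R) (M : ∀ j, Matrix (m j) (n j) R) :
    piKronecker (fun j => c j • M j) = (∏ j, c j) • piKronecker M := by
  ext x y
  simp [piKronecker, prod_mul_distrib]

theorem piKronecker_sum [DecidableEq ι] [Fintype κ] (M : ∀ j, κ → Matrix (m j) (n j) R) :
    piKronecker (fun j => ∑ k, M j k) = ∑ f : ι → κ, piKronecker fun j => M j (f j) := by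
  ext x y
  simp only [piKronecker, of_apply, Matrix.sum_apply, Fintype.prod_sum]

theorem piKronecker_mul_piKronecker [DecidableEq ι] [∀ j, Fintype (m j)]
    (M : ∀ j, Matrix (l j) (m j) R) (N : ∀ j, Matrix (m j) (n j) R) :
    piKronecker M * piKronecker N = piKronecker fun j => M j * N j := by
  ext x y
  simp only [piKronecker, of_apply, Matrix.mul_apply, Fintype.prod_sum, prod_mul_distrib]

theorem piKronecker_eq_zero {M : ∀ j, Matrix (m j) (n j) R} {j : ι} (hj : M j = 0) :
    piKronecker M = 0 := by
  ext x y
  exact prod_eq_zero (mem_univ j) (by simp [hj])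

theorem orthogonalIdempotents_piKronecker {V : Type*} [DecidableEq ι] [Fintype V] [DecidableEq V]
    {E : κ → Matrix V V R} (hE : OrthogonalIdempotents E) :
    OrthogonalIdempotents fun f : ι → κ => piKronecker fun j => E (f j) where
  idem f := by
    simp only [IsIdempotentElem, piKronecker_mul_piKronecker, (hE.idem _).eq]
  ortho f g hfg := by
    obtain ⟨j, hj⟩ := Function.ne_iff.1 hfg
    rw [piKronecker_mul_piKronecker]
    exact piKronecker_eq_zero (hE.ortho hj)

end PiKronecker

theorem sum_smul_mul_of_orthogonalIdempotents {ι R S : Type*} [Fintype ι] [CommSemiring R]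
    [Semiring S] [Algebra R S] {e : ι → S} (he : OrthogonalIdempotents e) (c : ι → R) (k : ι) :
    (∑ i, c i • e i) * e k = c k • e k := by
  classical
  simp only [sum_mul, smul_mul_assoc, he.mul_eq, smul_ite, smul_zero, sum_ite_eq', mem_univ,
    if_true]

section SymKronecker

variable {ι κ μ R U V : Type*} [Fintype ι] [DecidableEq ι] [Fintype κ] [DecidableEq κ]
  [Fintype μ] [DecidableEq μ] [CommSemiring R]

variable (ι) in
/-- The sum of the Kronecker products of words of content `α` in the matrices `M_r`, with positions
indexed by `ι`: the coefficient of `s^α` in the `ι`-fold Kronecker power of `Σ_r s_r M_r`. Both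
`A_α` and `E_β` are of this form. -/
def symKronecker (M : κ → Matrix U V R) (α : κ → ℕ) : Matrix (ι → U) (ι → V) R :=
  ∑ f : ι → κ with wordContent f = α, piKronecker fun j => M (f j)

theorem symKronecker_apply_of_eq_ite {M : κ → Matrix U V R} {x : ι → U} {y : ι → V}
    {r : ι → κ} (hr : ∀ j i, M i (x j) (y j) = if r j = i then 1 else 0) (α : κ → ℕ) :
    symKronecker ι M α x y = if wordContent r = α then 1 else 0 := by
  simp only [symKronecker, piKronecker, Matrix.sum_apply, of_apply, hr, Fintype.prod_boole,
    ← funext_iff, sum_ite_eq, mem_filter, mem_univ, true_and]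

variable {A : κ → Matrix U V R} {E : μ → Matrix U V R} {P : Matrix μ κ R}

theorem symKronecker_eq_sum_smul_piKronecker (hAE : ∀ i, A i = ∑ j, P j i • E j) (α : κ → ℕ) :
    symKronecker ι A α =
      ∑ f : ι → μ, symPowerCoeff P α (wordContent f) • piKronecker fun j => E (f j) := by
  calc
    symKronecker ι A α
        = ∑ g : ι → κ with wordContent g = α, ∑ f : ι → μ,
            (∏ j, P (f j) (g j)) • piKronecker fun j => E (f j) := by
          simp only [symKronecker, hAE, piKronecker_sum, piKronecker_smul]
    _ = ∑ f : ι → μ, (∑ g : ι → κ with wordContent g = α, ∏ j, P (f j) (g j)) •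
            piKronecker fun j => E (f j) := by
          rw [sum_comm]
          simp only [sum_smul]
    _ = _ := by simp only [symPowerCoeff_wordContent]

theorem symKronecker_eq_sum_smul_symKronecker (hAE : ∀ i, A i = ∑ j, P j i • E j) (α : κ → ℕ) :
    symKronecker ι A α =
      ∑ β ∈ piAntidiag univ (Fintype.card ι), symPowerCoeff P α β • symKronecker ι E β := by
  rw [symKronecker_eq_sum_smul_piKronecker hAE,
    ← sum_fiberwise_of_maps_to fun f _ => wordContent_mem_piAntidiag f]
  refine sum_congr rfl fun β _ => ?_
  rw [symKronecker, smul_sum]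
  refine sum_congr rfl fun f hf => ?_
  rw [(mem_filter.1 hf).2]

theorem symKronecker_mul_symKronecker [Fintype V] [DecidableEq V] {A : κ → Matrix V V R}
    {E : μ → Matrix V V R} (hE : OrthogonalIdempotents E) (hAE : ∀ i, A i = ∑ j, P j i • E j)
    (α : κ → ℕ) (β : μ → ℕ) :
    symKronecker ι A α * symKronecker ι E β = symPowerCoeff P α β • symKronecker ι E β := by
  rw [symKronecker_eq_sum_smul_piKronecker hAE, symKronecker, mul_sum, smul_sum]
  refine sum_congr rfl fun f hf => ?_
  rw [sum_smul_mul_of_orthogonalIdempotents (orthogonalIdempotents_piKronecker hE),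
    (mem_filter.1 hf).2]

end SymKronecker

theorem ham_eigenvalues_general {ι κ μ R V : Type*} [Fintype ι] [DecidableEq ι]
    [Fintype κ] [DecidableEq κ] [Fintype μ] [DecidableEq μ] [CommSemiring R]
    [Fintype V] [DecidableEq V] {A : κ → Matrix V V R} {E : μ → Matrix V V R} {P : Matrix μ κ R}
    (hAE : ∀ i, A i = ∑ j, P j i • E j) :
    (∀ α, symKronecker ι A α =
      ∑ β ∈ piAntidiag univ (Fintype.card ι), symPowerCoeff P α β • symKronecker ι E β) ∧
    (OrthogonalIdempotents E → ∀ α β,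
      symKronecker ι A α * symKronecker ι E β = symPowerCoeff P α β • symKronecker ι E β) :=
  ⟨symKronecker_eq_sum_smul_symKronecker hAE, fun hE => symKronecker_mul_symKronecker hE hAE⟩

theorem exists_eq_ite_of_sum_eq_one {κ R : Type*} [Fintype κ] [DecidableEq κ] [Semiring R]
    [CharZero R] {a : κ → R} (ha : ∀ i, a i = 0 ∨ a i = 1) (hsum : ∑ i, a i = 1) :
    ∃ r, ∀ i, a i = if r = i then 1 else 0 := by
  classical
  have eq_ite (i : κ) : a i = if a i = 1 then 1 else 0 := by
    rcases ha i with h | h <;> simp [h]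
  have card_eq_one : #{i | a i = 1} = 1 := by
    rw [sum_congr rfl fun i _ => eq_ite i, sum_boole] at hsum
    exact_mod_cast hsum
  obtain ⟨r, hr⟩ := Finset.card_eq_one.1 card_eq_one
  have eq_one_iff (i : κ) : a i = 1 ↔ r = i := by
    simpa [eq_comm] using Finset.ext_iff.1 hr i
  exact ⟨r, fun i => by rw [eq_ite i]; simp only [eq_one_iff]⟩

section HammingScheme

variable {d : ℕ} {V : Type} [Fintype V] [DecidableEq V]

theorem AssocScheme.exists_apply_eq_ite (S : AssocScheme d V) (x y : V) :
    ∃ r, ∀ i, S.A i x y = if r = i then 1 else 0 :=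
  exists_eq_ite_of_sum_eq_one (S.entries_zero_or_one · x y) <| by
    simpa [Matrix.sum_apply] using congr_fun₂ S.A_sum x y

theorem AssocScheme.ham_eq_symKronecker (S : AssocScheme d V) (n : ℕ) (α : Fin (d + 1) → ℕ) :
    S.ham n α = symKronecker (Fin n) S.A α := by
  ext x y
  choose r hr using fun j => S.exists_apply_eq_ite (x j) (y j)
  have profile_eq : S.profile n x y = wordContent r := by
    ext i
    simp [AssocScheme.profile, wordContent, hr]
  rw [symKronecker_apply_of_eq_ite hr, AssocScheme.ham, of_apply, profile_eq]

theorem idemMat_eq_symKronecker (E : Fin (d + 1) → Matrix V V ℂ) (n : ℕ) (β : Fin (d + 1) → ℕ) :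
    idemMat E n β = symKronecker (Fin n) E β := by
  ext x y
  simp [idemMat, symKronecker, piKronecker, Matrix.sum_apply, wordContent, funext_iff]

theorem hamEigenvalue_eq_symPowerCoeff (n : ℕ) (P : Matrix (Fin (d + 1)) (Fin (d + 1)) ℂ)
    (α β : Fin (d + 1) → ℕ) : hamEigenvalue d n P α β = symPowerCoeff P α β := by
  simp only [hamEigenvalue, symPowerCoeff, toMvPolynomial, C_mul_X_eq_monomial]

end HammingScheme

/-- `A_α = Σ_β p_α(β) E_β` and `A_α E_β = p_α(β) E_β`: the numbers
`p_α(β)` are the eigenvalues of `H(n,A)`, i.e. the matrix of eigenvalues of `H(n,A)`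
represents the action of `P` on homogeneous polynomials of degree `n`. -/
theorem ham_eigenvalues {V : Type} [Fintype V] [DecidableEq V]
    {d : ℕ} (S : AssocScheme d V)
    (E : Fin (d + 1) → Matrix V V ℂ)
    (hE0 : E 0 = (Fintype.card V : ℂ)⁻¹ • Matrix.of fun _ _ => 1)
    (hEsum : ∑ j, E j = 1)
    (hEherm : ∀ j, (E j)ᴴ = E j)
    (hEidem : ∀ j, E j * E j = E j)
    (hEorth : ∀ j k, j ≠ k → E j * E k = 0)
    (P : Matrix (Fin (d + 1)) (Fin (d + 1)) ℂ)
    (hAE : ∀ i, S.A i = ∑ j, P j i • E j)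
    (n : ℕ) (hn : 1 ≤ n) :
    (∀ α ∈ Finset.Nat.antidiagonalTuple (d + 1) n,
        S.ham n α = ∑ β ∈ Finset.Nat.antidiagonalTuple (d + 1) n,
          hamEigenvalue d n P α β • idemMat E n β) ∧
    (∀ α ∈ Finset.Nat.antidiagonalTuple (d + 1) n,
      ∀ β ∈ Finset.Nat.antidiagonalTuple (d + 1) n,
        S.ham n α * idemMat E n β = hamEigenvalue d n P α β • idemMat E n β) := by
  obtain ⟨expansion, eigenvalue⟩ := ham_eigenvalues_general (ι := Fin n) hAE
  simp only [S.ham_eq_symKronecker, idemMat_eq_symKronecker, hamEigenvalue_eq_symPowerCoeff,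
    ← piAntidiag_univ_fin_eq_antidiagonalTuple]
  exact ⟨fun α _ => by simpa only [Fintype.card_fin] using expansion α,
    fun α _ β _ => eigenvalue ⟨hEidem, hEorth⟩ α β⟩
end

section
/- Let 𝒜 be a vector space of v×v complex matrices that contains the identity matrix I and the all-ones matrix J, is closed under matrix multiplication, conjugate transposition and Schur (entrywise) multiplication, and in which any two elements commute under matrix multiplication. Then 𝒜 is the Bose-Mesner algebra of an association scheme: 𝒜 has a basis A_0,…,A_d of 01-matrices which forms an association scheme. -/
open Matrix Finset

/-!
A subalgebra of the functions on a finite set is spanned by the indicators of the classes of points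
that it does not separate: a product of functions equal to `1` at `x` and vanishing at the points
separated from `x` is the indicator of the class of `x`. For the Schur product, the matrices in `𝒜`
are such a subalgebra of the functions on `V × V`, and its class indicators are the required basis.
Conjugate transposition permutes the classes. Commuting with `J` makes the diagonal of each matrix
in `𝒜` constant, so the diagonal of `V × V` is a single class, with indicator `I`.
-/

section ClassIndicator

variable {X : Type*} (K : Type*)

open Classical in
/-- The `K`-valued indicator function of an equivalence class `c` of `r`. -/
noncomputable def classIndicator [Zero K] [One K] (r : Setoid X) (c : Quotient r) (x : X) : K :=
  if Quotient.mk r x = c then 1 else 0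

theorem sum_classIndicator [AddCommMonoidWithOne K] (r : Setoid X) [Fintype (Quotient r)] :
    ∑ c, classIndicator K r c = 1 := by
  ext x
  simp [classIndicator]

theorem linearIndependent_classIndicator [Ring K] (r : Setoid X) :
    LinearIndependent K (classIndicator K r) := by
  rw [linearIndependent_iff']
  intro s g hg c hc
  simpa [classIndicator, hc] using congrFun hg c.out

variable {K}

theorem mem_span_classIndicator [Semiring K] {r : Setoid X} [Finite (Quotient r)] {f : X → K}
    (hf : ∀ x y, r x y → f x = f y) :
    f ∈ Submodule.span K (Set.range (classIndicator K r)) := by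
  cases nonempty_fintype (Quotient r)
  refine (Submodule.mem_span_range_iff_exists_fun K).2 ⟨Quotient.lift f hf, ?_⟩
  ext x
  simp [classIndicator]

end ClassIndicator

section FunctionSubalgebra

variable {X K : Type*}

/-- The relation on `X` identifying two points which no function in `S` separates. -/
def agreementSetoid (S : Set (X → K)) : Setoid X where
  r x y := ∀ f ∈ S, f x = f y
  iseqv :=
    { refl := fun _ _ _ => rfl
      symm := fun h f hf => (h f hf).symm
      trans := fun h₁ h₂ f hf => (h₁ f hf).trans (h₂ f hf) }

variable [Field K] (A : Subalgebra K (X → K))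

theorem exists_mem_eq_one_eq_zero {f : X → K} (hf : f ∈ A) {x y : X} (hxy : f x ≠ f y) :
    ∃ g ∈ A, g x = 1 ∧ g y = 0 := by
  refine ⟨(f x - f y)⁻¹ • (f - algebraMap K _ (f y)),
    A.smul_mem (A.sub_mem hf (A.algebraMap_mem _)) _, ?_, ?_⟩
  · simp [inv_mul_cancel₀ (sub_ne_zero.2 hxy)]
  · simp

theorem exists_mem_eq_one_eq_zero_of_not_agree (x y : X) :
    ∃ g ∈ A, g x = 1 ∧ (¬ agreementSetoid (A : Set (X → K)) y x → g y = 0) := by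
  by_cases hyx : agreementSetoid (A : Set (X → K)) y x
  · exact ⟨1, A.one_mem, rfl, fun h => absurd hyx h⟩
  · obtain ⟨f, hf, hne⟩ := not_forall₂.1 hyx
    obtain ⟨g, hg, hgx, hgy⟩ := exists_mem_eq_one_eq_zero A hf (Ne.symm hne)
    exact ⟨g, hg, hgx, fun _ => hgy⟩

theorem classIndicator_mem [Finite X] (c : Quotient (agreementSetoid (A : Set (X → K)))) :
    classIndicator K _ c ∈ A := by
  cases nonempty_fintype X
  obtain ⟨x, rfl⟩ := Quotient.exists_rep c
  choose g hgA hgx hg using exists_mem_eq_one_eq_zero_of_not_agree A x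
  suffices classIndicator K _ ⟦x⟧ = ∏ y, g y from this ▸ A.prod_mem fun y _ => hgA y
  ext z
  rw [Finset.prod_apply, classIndicator]
  split_ifs with hzx
  · exact (Finset.prod_eq_one fun y _ => (Quotient.exact hzx _ (hgA y)).trans (hgx y)).symm
  · have hz : g z z = 0 := hg z (hzx ∘ Quotient.sound)
    exact (Finset.prod_eq_zero (f := (g · z)) (Finset.mem_univ z) hz).symm

theorem span_classIndicator_agreementSetoid [Finite X] :
    Submodule.span K (Set.range (classIndicator K (agreementSetoid (A : Set (X → K))))) =
      Subalgebra.toSubmodule A := by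
  refine le_antisymm (Submodule.span_le.2 ?_) fun f hf => ?_
  · rintro _ ⟨c, rfl⟩
    exact classIndicator_mem A c
  · exact mem_span_classIndicator fun x y hxy => hxy f hf

end FunctionSubalgebra

section RelationMatrix

variable {m n V K : Type*}

section Semiring

variable [Semiring K]

/-- The matrix with prescribed entries; it turns pointwise products of functions on `m × n` into
Schur products. -/
def matrixOfEntries : (m × n → K) ≃ₗ[K] Matrix m n K :=
  LinearEquiv.curry K K m n ≪≫ₗ Matrix.ofLinearEquiv K

/-- The relation on positions identifying two positions at which every matrix in `𝒜` has equal
entries. -/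
def entrySetoid (𝒜 : Submodule K (Matrix m n K)) : Setoid (m × n) :=
  agreementSetoid (𝒜.comap matrixOfEntries.toLinearMap : Set (m × n → K))

theorem entrySetoid_iff {𝒜 : Submodule K (Matrix m n K)} {p q : m × n} :
    entrySetoid 𝒜 p q ↔ ∀ M ∈ 𝒜, M p.1 p.2 = M q.1 q.2 :=
  ⟨fun h M hM => h (Function.uncurry M) hM, fun h f hf => h (matrixOfEntries f) hf⟩

/-- The 01-matrix of a class `c` of positions; these are the basis matrices `A_i` of the scheme,
before numbering. -/
noncomputable def relationMatrix (𝒜 : Submodule K (Matrix m n K)) (c : Quotient (entrySetoid 𝒜)) :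
    Matrix m n K :=
  matrixOfEntries (classIndicator K (entrySetoid 𝒜) c)

open Classical in
theorem relationMatrix_apply (𝒜 : Submodule K (Matrix m n K)) (c : Quotient (entrySetoid 𝒜))
    (x : m) (y : n) :
    relationMatrix 𝒜 c x y = if Quotient.mk (entrySetoid 𝒜) (x, y) = c then 1 else 0 :=
  rfl

theorem relationMatrix_eq_zero_or_one (𝒜 : Submodule K (Matrix m n K))
    (c : Quotient (entrySetoid 𝒜)) (x : m) (y : n) :
    relationMatrix 𝒜 c x y = 0 ∨ relationMatrix 𝒜 c x y = 1 := by
  classical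
  rw [relationMatrix_apply]
  exact (ite_eq_or_eq _ _ _).symm

theorem sum_relationMatrix (𝒜 : Submodule K (Matrix m n K)) [Fintype (Quotient (entrySetoid 𝒜))] :
    ∑ c, relationMatrix 𝒜 c = Matrix.of fun _ _ => 1 := by
  simp only [relationMatrix, ← map_sum, sum_classIndicator]
  rfl

theorem entrySetoid_swap [InvolutiveStar K] {𝒜 : Submodule K (Matrix V V K)}
    (hstar : ∀ M ∈ 𝒜, Mᴴ ∈ 𝒜) {p q : V × V} (hpq : entrySetoid 𝒜 p q) :
    entrySetoid 𝒜 p.swap q.swap :=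
  entrySetoid_iff.2 fun M hM => star_injective (entrySetoid_iff.1 hpq Mᴴ (hstar M hM))

theorem exists_transpose_relationMatrix_eq [InvolutiveStar K] {𝒜 : Submodule K (Matrix V V K)}
    (hstar : ∀ M ∈ 𝒜, Mᴴ ∈ 𝒜) (c : Quotient (entrySetoid 𝒜)) :
    ∃ c', (relationMatrix 𝒜 c)ᵀ = relationMatrix 𝒜 c' := by
  classical
  obtain ⟨p, rfl⟩ := Quotient.exists_rep c
  refine ⟨⟦p.swap⟧, ?_⟩
  ext x y
  have swap_class : (⟦(y, x)⟧ : Quotient (entrySetoid 𝒜)) = ⟦p⟧ ↔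
      (⟦(x, y)⟧ : Quotient (entrySetoid 𝒜)) = ⟦p.swap⟧ := by
    rw [Quotient.eq, Quotient.eq]
    exact ⟨entrySetoid_swap hstar, entrySetoid_swap hstar⟩
  exact if_congr swap_class rfl rfl

theorem relationMatrix_mk_diag [DecidableEq V] {𝒜 : Submodule K (Matrix V V K)}
    (hI : (1 : Matrix V V K) ∈ 𝒜) (hdiag : ∀ M ∈ 𝒜, ∀ x y, M x x = M y y) (v : V) :
    relationMatrix 𝒜 ⟦(v, v)⟧ = 1 := by
  nontriviality K
  ext x y
  have mem_diag_class : (⟦(x, y)⟧ : Quotient (entrySetoid 𝒜)) = ⟦(v, v)⟧ ↔ x = y := by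
    rw [Quotient.eq, entrySetoid_iff]
    refine ⟨fun h => ?_, ?_⟩
    · simpa [Matrix.one_apply] using h 1 hI
    · rintro rfl M hM
      exact hdiag M hM x v
  simp only [relationMatrix_apply, mem_diag_class, Matrix.one_apply]

end Semiring

theorem linearIndependent_relationMatrix [Ring K] (𝒜 : Submodule K (Matrix m n K)) :
    LinearIndependent K (relationMatrix 𝒜) :=
  (linearIndependent_classIndicator K (entrySetoid 𝒜)).map' _ matrixOfEntries.ker

theorem span_relationMatrix [Field K] [Finite m] [Finite n] {𝒜 : Submodule K (Matrix m n K)}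
    (hJ : (Matrix.of fun _ _ => (1 : K)) ∈ 𝒜)
    (hschur : ∀ M ∈ 𝒜, ∀ N ∈ 𝒜, M ⊙ N ∈ 𝒜) :
    Submodule.span K (Set.range (relationMatrix 𝒜)) = 𝒜 := by
  let entries : Submodule K (m × n → K) := 𝒜.comap matrixOfEntries.toLinearMap
  have span_entries :
      Submodule.span K (Set.range (classIndicator K (entrySetoid 𝒜))) = entries :=
    span_classIndicator_agreementSetoid
      (entries.toSubalgebra hJ fun f g hf hg => hschur _ hf _ hg)
  calc Submodule.span K (Set.range (relationMatrix 𝒜))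
      = (Submodule.span K (Set.range (classIndicator K (entrySetoid 𝒜)))).map
          matrixOfEntries.toLinearMap := by
        rw [Submodule.map_span, ← Set.range_comp]
        rfl
    _ = 𝒜 := by
        rw [span_entries, Submodule.map_comap_eq_of_surjective matrixOfEntries.surjective]

end RelationMatrix

theorem eq_of_commute_diagonal_of_one {V R : Type*} [Fintype V] [DecidableEq V]
    [NonAssocSemiring R] {w : V → R}
    (h : Commute (diagonal w) (Matrix.of fun _ _ => (1 : R))) (x y : V) : w x = w y := by
  simpa using congrFun₂ h.eq x y

theorem exists_equiv_fin_succ_apply_zero_eq {α : Type*} [Finite α] (a : α) :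
    ∃ (d : ℕ) (e : Fin (d + 1) ≃ α), e 0 = a := by
  classical
  have : Nonempty α := ⟨a⟩
  obtain ⟨d, hd⟩ := Nat.exists_eq_succ_of_ne_zero (Nat.card_pos (α := α)).ne'
  let e := (Finite.equivFinOfCardEq hd).symm
  exact ⟨d, e.trans (Equiv.swap (e 0) a), by simp⟩

/-- A commutative vector space of matrices containing `I` and `J`
that is closed under multiplication, conjugate transposition and Schur multiplication
is the Bose–Mesner algebra of an association scheme: it has a basis of 01-matrices
forming an association scheme. -/
theorem bose_mesner_characterization {V : Type} [Fintype V] [DecidableEq V]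
    [Nonempty V] (𝒜 : Submodule ℂ (Matrix V V ℂ))
    (hI : (1 : Matrix V V ℂ) ∈ 𝒜)
    (hJ : (Matrix.of fun _ _ => (1 : ℂ)) ∈ 𝒜)
    (hmul : ∀ M ∈ 𝒜, ∀ N ∈ 𝒜, M * N ∈ 𝒜)
    (hstar : ∀ M ∈ 𝒜, Mᴴ ∈ 𝒜)
    (hschur : ∀ M ∈ 𝒜, ∀ N ∈ 𝒜, Matrix.hadamard M N ∈ 𝒜)
    (hcomm : ∀ M ∈ 𝒜, ∀ N ∈ 𝒜, M * N = N * M) :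
    ∃ (d : ℕ) (S : AssocScheme d V),
      Submodule.span ℂ (Set.range S.A) = 𝒜 ∧ LinearIndependent ℂ S.A := by
  have hdiag : ∀ M ∈ 𝒜, ∀ x y, M x x = M y y := fun M hM =>
    eq_of_commute_diagonal_of_one (one_hadamard M ▸ hcomm _ (hschur _ hI _ hM) _ hJ)
  have hspan := span_relationMatrix hJ hschur
  have hmem (c) : relationMatrix 𝒜 c ∈ 𝒜 := hspan.le (Submodule.subset_span ⟨c, rfl⟩)
  obtain ⟨v⟩ := ‹Nonempty V›
  obtain ⟨d, e, he⟩ :=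
    exists_equiv_fin_succ_apply_zero_eq (Quotient.mk (entrySetoid 𝒜) (v, v))
  have hspan_reindexed : Submodule.span ℂ (Set.range (relationMatrix 𝒜 ∘ e)) = 𝒜 := by
    rw [e.surjective.range_comp, hspan]
  let S : AssocScheme d V :=
    { A := relationMatrix 𝒜 ∘ e
      entries_zero_or_one := fun i => relationMatrix_eq_zero_or_one 𝒜 (e i)
      A_zero := by rw [Function.comp_apply, he, relationMatrix_mk_diag hI hdiag]
      A_sum := by
        have := Fintype.ofEquiv _ e
        exact (e.sum_comp _).trans (sum_relationMatrix 𝒜)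
      transpose_mem := fun i =>
        e.surjective.exists.1 (exists_transpose_relationMatrix_eq hstar (e i))
      mul_eq_lin_comb := fun i j => by
        obtain ⟨p, hp⟩ := (Submodule.mem_span_range_iff_exists_fun ℂ).1
          (hspan_reindexed.ge (hmul _ (hmem (e i)) _ (hmem (e j))))
        exact ⟨p, hp.symm⟩
      mul_comm' := fun i j => hcomm _ (hmem (e i)) _ (hmem (e j)) }
  exact ⟨d, S, hspan_reindexed, (linearIndependent_relationMatrix 𝒜).comp e e.injective⟩
end

section
/- (MacWilliams theorem for generalized Hamming schemes.) Let A = {A_0,…,A_d} be an association scheme on v vertices with principal idempotents E_0,…,E_d and invertible matrix of eigenvalues P, let n ≥ 1, and let C be a nonempty subset of V^n with characteristic column vector χ. Define the weight enumerator W_C(s) = (1/|C|)·Σ_α (χᵀA_αχ)·s^α and the dual weight enumerator W⊥_C(t) = (v^n/|C|²)·Σ_β (χᵀE_βχ)·t^β, sums over all vectors of d+1 nonnegative integers summing to n. Then W⊥_C(t) = (v^n/|C|)·W_C(P^{-1}t), where W_C(P^{-1}t) denotes the result of substituting s_i ↦ Σ_j (P^{-1})_{i,j}·t_j in W_C. 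-/
open Matrix Finset MvPolynomial

/-- The weight enumerator `W_C(s) = |C|⁻¹ Σ_α (χᵀ A_α χ) s^α` of a subset `C ⊆ V^n`. -/
noncomputable def hamWeightEnum {V : Type} [Fintype V] [DecidableEq V] {d : ℕ}
    (S : AssocScheme d V) (n : ℕ) (Cd : Finset (Fin n → V)) :
    MvPolynomial (Fin (d + 1)) ℂ :=
  (Cd.card : ℂ)⁻¹ •
    ∑ α ∈ Finset.Nat.antidiagonalTuple (d + 1) n,
      MvPolynomial.C (∑ x ∈ Cd, ∑ y ∈ Cd, S.ham n α x y) *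
        ∏ i : Fin (d + 1), MvPolynomial.X i ^ α i

/-- The dual weight enumerator `W⊥_C(t) = (vⁿ/|C|²) Σ_β (χᵀ E_β χ) t^β`. -/
noncomputable def hamDualWeightEnum {V : Type} [Fintype V] [DecidableEq V] {d : ℕ}
    (E : Fin (d + 1) → Matrix V V ℂ) (n : ℕ) (Cd : Finset (Fin n → V)) :
    MvPolynomial (Fin (d + 1)) ℂ :=
  ((Fintype.card V : ℂ) ^ n / (Cd.card : ℂ) ^ 2) •
    ∑ β ∈ Finset.Nat.antidiagonalTuple (d + 1) n,
      MvPolynomial.C (∑ x ∈ Cd, ∑ y ∈ Cd, idemMat E n β x y) *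
        ∏ j : Fin (d + 1), MvPolynomial.X j ^ β j

/-!
Both enumerators come from the tensor power of a pencil of matrices: `∑ β, t^β • E_β` is the `n`-th
tensor power of `∑ r, t r • E r`, and likewise `A_α` is the coefficient of `s^α` in the tensor
power of `∑ r, s r • A r`, because exactly one `A r` is nonzero at each pair of vertices. Since
`E j = ∑ i, P⁻¹ i j • A i`, the substitution `s = P⁻¹ t` carries the second pencil to the first.
-/

section Multinomial

variable {ι κ : Type*} [Fintype ι] [Fintype κ] [DecidableEq κ]

theorem card_fiber_mem_piAntidiag (f : ι → κ) :
    (fun r => #{i | f i = r}) ∈ piAntidiag univ (Fintype.card ι) := by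
  have card_eq : Fintype.card ι = ∑ r, #{i | f i = r} :=
    card_eq_sum_card_fiberwise fun _ _ => mem_coe.2 (mem_univ _)
  simp [card_eq]

theorem prod_pow_card_fiber {M : Type*} [CommMonoid M] (f : ι → κ) (t : κ → M) :
    ∏ r, t r ^ #{i | f i = r} = ∏ i, t (f i) := by
  simp only [← prod_const, prod_fiberwise']

theorem prod_sum_mul_eq_sum_piAntidiag {R : Type*} [CommSemiring R] [DecidableEq ι]
    (a : ι → κ → R) (t : κ → R) :
    ∏ i, ∑ r, a i r * t r =
      ∑ β ∈ piAntidiag univ (Fintype.card ι),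
        (∑ f : ι → κ with (fun r => #{i | f i = r}) = β, ∏ i, a i (f i)) * ∏ r, t r ^ β r := by
  calc ∏ i, ∑ r, a i r * t r
      = ∑ f : ι → κ, (∏ i, a i (f i)) * ∏ r, t r ^ #{i | f i = r} := by
        simp only [Fintype.prod_sum, prod_mul_distrib, prod_pow_card_fiber]
    _ = ∑ β ∈ piAntidiag univ (Fintype.card ι), ∑ f : ι → κ with (fun r => #{i | f i = r}) = β,
          (∏ i, a i (f i)) * ∏ r, t r ^ #{i | f i = r} :=
        (sum_fiberwise_of_maps_to (fun f _ => card_fiber_mem_piAntidiag f) _).symm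
    _ = _ := by
        refine sum_congr rfl fun β _ => ?_
        rw [sum_mul]
        exact sum_congr rfl fun f hf => by rw [← (mem_filter_univ f).1 hf]

end Multinomial

theorem eq_sum_inv_smul_of_eq_sum_smul {R M κ : Type*} [CommRing R] [AddCommMonoid M] [Module R M]
    [Fintype κ] [DecidableEq κ] {P : Matrix κ κ R} (hP : IsUnit P.det) {a e : κ → M}
    (ha : ∀ i, a i = ∑ j, P j i • e j) (j : κ) : e j = ∑ i, P⁻¹ i j • a i := by
  calc e j = ∑ k, (P * P⁻¹) k j • e k := by
        simp [Matrix.mul_nonsing_inv P hP, Matrix.one_apply]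
    _ = ∑ i, P⁻¹ i j • a i := by
        simp only [ha, smul_sum, smul_smul, Matrix.mul_apply, sum_smul, mul_comm (P⁻¹ _ _)]
        exact sum_comm

section TensorEnumerator

variable {R ι κ V : Type*} [CommSemiring R] [Fintype ι] [Fintype κ]

/-- The polynomial `χᵀ (∑ r, X r • M r)^{⊗ι} χ`, where `χ` is the characteristic vector of
`Cd ⊆ V^ι`. It is the common unnormalized form of the two weight enumerators. -/
noncomputable def tensorEnumerator (M : κ → Matrix V V R) (Cd : Finset (ι → V)) :
    MvPolynomial κ R :=
  ∑ x ∈ Cd, ∑ y ∈ Cd, ∏ j, ∑ r, C (M r (x j) (y j)) * X r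

theorem aeval_tensorEnumerator {κ' : Type*} [Fintype κ'] (Q : Matrix κ κ' R)
    (M : κ → Matrix V V R) (Cd : Finset (ι → V)) :
    aeval (fun i => ∑ j, C (Q i j) * X j) (tensorEnumerator M Cd) =
      tensorEnumerator (fun j => ∑ i, Q i j • M i) Cd := by
  have aeval_linear_form (a b : V) :
      aeval (fun i => ∑ j, C (Q i j) * X j) (∑ i, C (M i a b) * X i) =
        ∑ j, C ((∑ i, Q i j • M i) a b) * (X j : MvPolynomial κ' R) := by
    simp only [map_sum, map_mul, aeval_X, algHom_C, algebraMap_eq, Matrix.sum_apply,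
      Matrix.smul_apply, smul_eq_mul, mul_sum, sum_mul]
    rw [sum_comm]
    exact sum_congr rfl fun j _ => sum_congr rfl fun i _ => by ring
  simp only [tensorEnumerator, map_sum (aeval _) _ Cd, map_prod, aeval_linear_form]

end TensorEnumerator

section WeightEnumerators

variable {V : Type} [Fintype V] [DecidableEq V] {d : ℕ}

theorem idemMat_apply (E : Fin (d + 1) → Matrix V V ℂ) (n : ℕ) (β : Fin (d + 1) → ℕ)
    (x y : Fin n → V) :
    idemMat E n β x y =
      ∑ f : Fin n → Fin (d + 1) with (fun r => #{j | f j = r}) = β, ∏ j, E (f j) (x j) (y j) := by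
  simp only [idemMat, Matrix.of_apply, funext_iff]

theorem sum_C_idemMat_mul_eq_tensorEnumerator (E : Fin (d + 1) → Matrix V V ℂ) (n : ℕ)
    (Cd : Finset (Fin n → V)) :
    ∑ β ∈ Nat.antidiagonalTuple (d + 1) n,
        C (∑ x ∈ Cd, ∑ y ∈ Cd, idemMat E n β x y) * ∏ r, X r ^ β r =
      tensorEnumerator E Cd := by
  have expand (x y : Fin n → V) :
      ∏ j, ∑ r, C (E r (x j) (y j)) * (X r : MvPolynomial (Fin (d + 1)) ℂ) =
        ∑ β ∈ Nat.antidiagonalTuple (d + 1) n, C (idemMat E n β x y) * ∏ r, X r ^ β r := by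
    simp only [prod_sum_mul_eq_sum_piAntidiag, Fintype.card_fin,
      piAntidiag_univ_fin_eq_antidiagonalTuple, idemMat_apply, map_sum, map_prod]
  simp only [tensorEnumerator, expand, map_sum, sum_mul]
  rw [sum_comm]
  exact sum_congr rfl fun x _ => sum_comm

theorem hamDualWeightEnum_eq_smul_tensorEnumerator (E : Fin (d + 1) → Matrix V V ℂ) (n : ℕ)
    (Cd : Finset (Fin n → V)) :
    hamDualWeightEnum E n Cd =
      ((Fintype.card V : ℂ) ^ n / (Cd.card : ℂ) ^ 2) • tensorEnumerator E Cd := by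
  rw [hamDualWeightEnum, sum_C_idemMat_mul_eq_tensorEnumerator]

namespace AssocScheme

variable (S : AssocScheme d V)

theorem exists_A_apply_eq_ite (a b : V) : ∃ r, ∀ i, S.A i a b = if i = r then 1 else 0 := by
  have apply_eq_ite (i) : S.A i a b = if S.A i a b = 1 then 1 else 0 := by
    rcases S.entries_zero_or_one i a b with h | h <;> simp [h]
  have sum_apply_eq_one : ∑ i, S.A i a b = 1 := by
    simpa only [Matrix.sum_apply, Matrix.of_apply] using congr_fun₂ S.A_sum a b
  have card_eq_one : #{i | S.A i a b = 1} = 1 := by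
    rw [sum_congr rfl fun i _ => apply_eq_ite i, sum_boole] at sum_apply_eq_one
    exact_mod_cast sum_apply_eq_one
  obtain ⟨r, filter_eq⟩ := Finset.card_eq_one.1 card_eq_one
  have apply_eq_one_iff (i) : S.A i a b = 1 ↔ i = r := by
    simpa only [mem_filter_univ, mem_singleton] using Finset.ext_iff.1 filter_eq i
  exact ⟨r, fun i => by simpa only [apply_eq_one_iff] using apply_eq_ite i⟩

theorem ham_eq_idemMat (n : ℕ) (α : Fin (d + 1) → ℕ) : S.ham n α = idemMat S.A n α := by
  choose rel A_apply using S.exists_A_apply_eq_ite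
  ext x y
  have profile_eq : S.profile n x y = fun r => #{j | rel (x j) (y j) = r} := by
    funext r
    simp [profile, A_apply, eq_comm]
  have prod_eq (f : Fin n → Fin (d + 1)) :
      ∏ j, S.A (f j) (x j) (y j) = if f = fun j => rel (x j) (y j) then 1 else 0 := by
    simp only [A_apply, prod_ite_zero, prod_const_one, mem_univ, true_imp_iff, funext_iff]
  simp only [ham, idemMat_apply, Matrix.of_apply, profile_eq, prod_eq, sum_ite_eq', mem_filter_univ]

theorem hamWeightEnum_eq_smul_tensorEnumerator (n : ℕ) (Cd : Finset (Fin n → V)) :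
    hamWeightEnum S n Cd = (Cd.card : ℂ)⁻¹ • tensorEnumerator S.A Cd := by
  simp only [hamWeightEnum, ham_eq_idemMat, sum_C_idemMat_mul_eq_tensorEnumerator]

end AssocScheme

theorem macwilliams_generalizedHamming_general (S : AssocScheme d V)
    (E : Fin (d + 1) → Matrix V V ℂ) (Q : Matrix (Fin (d + 1)) (Fin (d + 1)) ℂ)
    (hE : ∀ j, E j = ∑ i, Q i j • S.A i) (n : ℕ) (Cd : Finset (Fin n → V)) (hC : Cd.Nonempty) :
    hamDualWeightEnum E n Cd =
      ((Fintype.card V : ℂ) ^ n / (Cd.card : ℂ)) •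
        aeval (fun i => ∑ j, C (Q i j) * X j) (hamWeightEnum S n Cd) := by
  have card_ne_zero : (Cd.card : ℂ) ≠ 0 := Nat.cast_ne_zero.2 hC.card_ne_zero
  rw [hamDualWeightEnum_eq_smul_tensorEnumerator, S.hamWeightEnum_eq_smul_tensorEnumerator,
    map_smul, aeval_tensorEnumerator, ← funext hE, smul_smul]
  congr 1
  field_simp

end WeightEnumerators

/-- MacWilliams theorem for generalized Hamming schemes:
`W⊥_C(t) = (vⁿ/|C|) W_C(P⁻¹ t)`. -/
theorem macwilliams_generalizedHamming {V : Type} [Fintype V] [DecidableEq V]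
    [Nonempty V] {d : ℕ} (S : AssocScheme d V)
    (E : Fin (d + 1) → Matrix V V ℂ)
    (hE0 : E 0 = (Fintype.card V : ℂ)⁻¹ • Matrix.of fun _ _ => 1)
    (hEsum : ∑ j, E j = 1)
    (hEherm : ∀ j, (E j)ᴴ = E j)
    (hEidem : ∀ j, E j * E j = E j)
    (hEorth : ∀ j k, j ≠ k → E j * E k = 0)
    (P : Matrix (Fin (d + 1)) (Fin (d + 1)) ℂ)
    (hPunit : IsUnit P.det)
    (hAE : ∀ i, S.A i = ∑ j, P j i • E j)
    (n : ℕ) (hn : 1 ≤ n)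
    (Cd : Finset (Fin n → V)) (hC : Cd.Nonempty) :
    hamDualWeightEnum E n Cd
      = ((Fintype.card V : ℂ) ^ n / (Cd.card : ℂ)) •
          MvPolynomial.aeval
            (fun i => ∑ j : Fin (d + 1), MvPolynomial.C (P⁻¹ i j) * MvPolynomial.X j)
            (hamWeightEnum S n Cd) := by
  exact macwilliams_generalizedHamming_general S E P⁻¹
    (eq_sum_inv_smul_of_eq_sum_smul hPunit hAE) n Cd hC
end

section
/- (MacWilliams theorem for additive codes in translation schemes.) Let Γ be a finite abelian group of order v and ⟨·,·⟩ : Γ × Γ → ℂˣ a symmetric nondegenerate bicharacter (multiplicative in each argument, with ⟨g,·⟩ trivial only for g = 0). Let {N_0, N_1, …, N_d} be a partition of Γ with N_0 = {0} such that the matrices A_i indexed by Γ, with (A_i)_{x,y} = 1 iff y − x ∈ N_i, form an association scheme, and suppose there is an invertible (d+1)×(d+1) complex matrix P such that for every j, every h ∈ N_j and every i, Σ_{g ∈ N_i} ⟨h,g⟩ = P_{j,i}. Let n ≥ 1 and let C be a subgroup of Γ^n. Define, for x, y ∈ Γ^n, h(x,y) as the vector whose r-th entry is #{j : y_j − x_j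 ∈ N_r}, the weight enumerator W_C(s) = (1/|C|)·Σ_{x,y ∈ C} s^{h(x,y)}, and the dual code C⊥ = {y ∈ Γ^n : Π_{j=1}^{n} ⟨x_j, y_j⟩ = 1 for all x ∈ C}. Then W_{C⊥}(t) = (v^n/|C|)·W_C(P^{-1}t), where W_C(P^{-1}t) denotes substituting s_i ↦ Σ_j (P^{-1})_{i,j}·t_j in W_C. -/
open Matrix Finset MvPolynomial

open Classical in
/-- The weight enumerator `W_C(s) = |C|⁻¹ Σ_{x,y ∈ C} s^{h(x,y)}` of a code `C ⊆ Γⁿ`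
for the translation scheme with classes `N_0, …, N_d`. -/
noncomputable def transWeightEnum {Γ : Type} [AddCommGroup Γ] [Fintype Γ] {d : ℕ}
    (N : Fin (d + 1) → Finset Γ) (n : ℕ) (Cd : Finset (Fin n → Γ)) :
    MvPolynomial (Fin (d + 1)) ℂ :=
  (Cd.card : ℂ)⁻¹ •
    ∑ x ∈ Cd, ∑ y ∈ Cd,
      ∏ r : Fin (d + 1),
        MvPolynomial.X r ^ (Finset.univ.filter fun j : Fin n => y j - x j ∈ N r).card

open Classical in
/-- The dual code `C⊥ = {y : Π_j ⟨x_j, y_j⟩ = 1 for all x ∈ C}`. -/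
noncomputable def dualCode {Γ : Type} [AddCommGroup Γ] [Fintype Γ]
    (χ : Γ → Γ → ℂ) (n : ℕ) (Cd : Finset (Fin n → Γ)) : Finset (Fin n → Γ) :=
  Finset.univ.filter fun y => ∀ x ∈ Cd, ∏ j, χ (x j) (y j) = 1

/-!
The idea is Poisson summation. A pairing `ψ` of finite abelian groups `G`, `H`, with no kernel on
`G`, satisfies `|C| ∑_{y ∈ C⊥} ψ(x, y) = |H|` for `x ∈ C` and `= 0` for `x ∉ C`: expand `|C| 1_{C⊥}`
as `∑_{c ∈ C} ψ(c, ·)` and sum over `H` first. Hence summing the Fourier transform of a function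
over `C⊥` is, up to scaling, summing the function over `C`. For `G = Γ^ι` and `H = Δ^ι` take
`F(x) = ∏ⱼ u (class of xⱼ)`; its Fourier transform at `y` is the product of the one-letter
transforms, which are `P u` evaluated at the classes of the `yⱼ`. For `u = P⁻¹ t` these are just the
variables `t`, so that the two sums are the two weight enumerators.
-/

section Annihilator

variable {G H : Type*} [AddCommGroup G] [AddCommGroup H]

/-- The annihilator `C⊥` of a subgroup `C ≤ G` under a pairing of `G` and `H`. A pairing with values
in `M` is encoded as an additive map from `G` to the `M`-valued characters of `H`. -/
def annihilator {M : Type*} [CommMonoid M] (ψ : G →+ AddChar H M) (C : AddSubgroup G) :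
    AddSubgroup H where
  carrier := {y | ∀ x ∈ C, ψ x y = 1}
  zero_mem' x _ := (ψ x).map_zero_eq_one
  add_mem' hy hz x hx := by rw [AddChar.map_add_eq_mul, hy x hx, hz x hx, one_mul]
  neg_mem' {y} hy x hx := by
    have h : ψ x (-y) * ψ x y = 1 := by
      rw [← AddChar.map_add_eq_mul, neg_add_cancel, AddChar.map_zero_eq_one]
    rwa [hy x hx, mul_one] at h

variable {R : Type*} [CommRing R] [IsDomain R]

open Classical in
lemma sum_pairing_eq_ite_mem_annihilator [Fintype G] (ψ : G →+ AddChar H R) (C : AddSubgroup G)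
    (y : H) :
    ∑ x with x ∈ C, ψ x y = if y ∈ annihilator ψ C then (#{x | x ∈ C} : R) else 0 := by
  let pairWith : AddChar C R := (AddChar.doubleDualEmb y).compAddMonoidHom (ψ.comp C.subtype)
  have pairWith_eq_zero : pairWith = 0 ↔ y ∈ annihilator ψ C := by
    rw [AddChar.eq_zero_iff, Subtype.forall]
    rfl
  calc ∑ x with x ∈ C, ψ x y = ∑ x : C, pairWith x := Finset.sum_subtype _ (by simp) _
    _ = _ := by simp only [AddChar.sum_eq_ite, pairWith_eq_zero, Fintype.card_subtype]

variable [Fintype H]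

open Classical in
lemma sum_pairing_eq_ite_eq_zero {ψ : G →+ AddChar H R} (hψ : Function.Injective ψ) (x : G) :
    ∑ y, ψ x y = if x = 0 then (Fintype.card H : R) else 0 := by
  simp only [AddChar.sum_eq_ite, map_eq_zero_iff ψ hψ]

variable [Fintype G]

open Classical in
lemma card_mul_sum_annihilator_pairing {ψ : G →+ AddChar H R} (hψ : Function.Injective ψ)
    (C : AddSubgroup G) (x : G) :
    (#{c | c ∈ C} : R) * ∑ y with y ∈ annihilator ψ C, ψ x y =
      if x ∈ C then (Fintype.card H : R) else 0 := by
  calc (#{c | c ∈ C} : R) * ∑ y with y ∈ annihilator ψ C, ψ x y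
      = ∑ y, (∑ c with c ∈ C, ψ c y) * ψ x y := by
        simp only [sum_pairing_eq_ite_mem_annihilator, ite_mul, zero_mul, ← Finset.sum_filter,
          Finset.mul_sum]
    _ = ∑ c with c ∈ C, ∑ y, ψ (c + x) y := by
        simp only [Finset.sum_mul, map_add, AddChar.add_apply]
        exact Finset.sum_comm
    _ = ∑ c with c ∈ C, if c = -x then (Fintype.card H : R) else 0 := by
        simp only [sum_pairing_eq_ite_eq_zero hψ, eq_neg_iff_add_eq_zero]
    _ = if x ∈ C then (Fintype.card H : R) else 0 := by
        simp

open Classical in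
lemma card_mul_card_annihilator {ψ : G →+ AddChar H R} (hψ : Function.Injective ψ)
    (C : AddSubgroup G) :
    (#{x | x ∈ C} : R) * #{y | y ∈ annihilator ψ C} = Fintype.card H := by
  simpa using card_mul_sum_annihilator_pairing hψ C 0

open Classical in
lemma poisson_summation {A : Type*} [AddCommMonoid A] [Module R A] {ψ : G →+ AddChar H R}
    (hψ : Function.Injective ψ) (C : AddSubgroup G) (f : G → A) :
    (#{x | x ∈ C} : R) • ∑ y with y ∈ annihilator ψ C, ∑ x, ψ x y • f x =
      (Fintype.card H : R) • ∑ x with x ∈ C, f x := by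
  rw [Finset.sum_comm, Finset.smul_sum, Finset.smul_sum, Finset.sum_filter]
  refine Finset.sum_congr rfl fun x _ ↦ ?_
  rw [← Finset.sum_smul, smul_smul, card_mul_sum_annihilator_pairing hψ, ite_smul, zero_smul]

end Annihilator

section PiPairing

variable {Γ Δ : Type*} [AddCommGroup Γ] [AddCommGroup Δ]

/-- The coordinatewise product pairing `(x, y) ↦ ∏ⱼ χ(xⱼ, yⱼ)` of `Γ^ι` and `Δ^ι`. -/
@[simps]
def piPairing (ι : Type*) [Fintype ι] {M : Type*} [CommMonoid M] (χ : Γ →+ AddChar Δ M) :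
    (ι → Γ) →+ AddChar (ι → Δ) M where
  toFun x :=
    { toFun := fun y ↦ ∏ j, χ (x j) (y j)
      map_zero_eq_one' := by simp
      map_add_eq_mul' := by simp [AddChar.map_add_eq_mul, Finset.prod_mul_distrib] }
  map_zero' := by ext; simp
  map_add' x x' := by ext; simp [Finset.prod_mul_distrib]

variable {ι : Type*} [Fintype ι]

lemma piPairing_single [DecidableEq ι] {M : Type*} [CommMonoid M] (χ : Γ →+ AddChar Δ M)
    (x : ι → Γ) (i : ι) (h : Δ) : piPairing ι χ x (Pi.single i h) = χ (x i) h := by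
  rw [piPairing_apply_apply, Finset.prod_eq_single i _ (by simp), Pi.single_eq_same]
  intro j _ hji
  rw [Pi.single_eq_of_ne hji, AddChar.map_zero_eq_one]

lemma piPairing_injective {M : Type*} [CommMonoid M] {χ : Γ →+ AddChar Δ M}
    (hχ : Function.Injective χ) : Function.Injective (piPairing ι χ) := by
  classical
  intro x x' hxx'
  funext i
  apply hχ
  ext h
  rw [← piPairing_single χ x, ← piPairing_single χ x', hxx']

lemma prod_sum_pairing_smul [DecidableEq ι] {R A : Type*} [CommSemiring R] [CommSemiring A]
    [Algebra R A] [Fintype Γ] (χ : Γ →+ AddChar Δ R) (f : Γ → A) (y : ι → Δ) :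
    ∏ j, ∑ g, χ g (y j) • f g = ∑ x, piPairing ι χ x y • ∏ j, f (x j) := by
  simp only [Finset.prod_univ_sum, Fintype.piFinset_univ, Finset.prod_smul, piPairing_apply_apply]

end PiPairing

section WeightEnum

variable {Γ κ ι : Type*}

lemma exists_classFun_of_partition {N : κ → Finset Γ} (hNdisj : ∀ i j, i ≠ j → Disjoint (N i) (N j))
    (hNcover : ∀ g, ∃ i, g ∈ N i) : ∃ c : Γ → κ, ∀ i g, g ∈ N i ↔ c g = i := by
  choose c hc using hNcover
  refine ⟨c, fun i g ↦ ⟨fun hg ↦ ?_, fun h ↦ h ▸ hc g⟩⟩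
  by_contra hne
  exact Finset.disjoint_left.mp (hNdisj _ _ hne) (hc g) hg

variable [AddCommGroup Γ] [Fintype κ] [Fintype ι]

open Classical in
/-- The weight enumerator `transWeightEnum` with coefficients in an arbitrary field `K`, for classes
and coordinates indexed by arbitrary finite types. -/
noncomputable def weightEnum (K : Type*) [Field K] (N : κ → Finset Γ) (D : Finset (ι → Γ)) :
    MvPolynomial κ K :=
  (#D : K)⁻¹ • ∑ x ∈ D, ∑ y ∈ D, ∏ r, X r ^ #{j | y j - x j ∈ N r}

open Classical in
lemma weightEnum_addSubgroup [Fintype Γ] [DecidableEq ι] {K : Type*} [Field K] {N : κ → Finset Γ}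
    {c : Γ → κ} (hc : ∀ i g, g ∈ N i ↔ c g = i) {C : AddSubgroup (ι → Γ)}
    (hC : (#{x | x ∈ C} : K) ≠ 0) :
    weightEnum K N {x | x ∈ C} = ∑ x with x ∈ C, ∏ j, X (c (x j)) := by
  have monomial_eq (z : ι → Γ) :
      ∏ r, (X r : MvPolynomial κ K) ^ #{j | z j ∈ N r} = ∏ j, X (c (z j)) := by
    simp only [hc, ← Finset.prod_const]
    exact Finset.prod_fiberwise' _ _ _
  have sum_eq (x : ι → Γ) (hx : x ∈ C) :
      ∑ y with y ∈ C, ∏ r, (X r : MvPolynomial κ K) ^ #{j | y j - x j ∈ N r} =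
        ∑ y with y ∈ C, ∏ j, X (c (y j)) := by
    refine Finset.sum_equiv (Equiv.subRight x) (fun y ↦ ?_) fun y _ ↦ monomial_eq (y - x)
    simp [sub_eq_add_neg, C.add_mem_cancel_right (C.neg_mem hx)]
  rw [weightEnum, Finset.sum_congr rfl fun x hx ↦ sum_eq x (by simpa using hx), Finset.sum_const,
    ← Nat.cast_smul_eq_nsmul K, inv_smul_smul₀ hC]

end WeightEnum

section MacWilliams

variable {Γ Δ K κ κ' : Type*} [AddCommGroup Γ] [AddCommGroup Δ] [Fintype Γ] [Field K] [Fintype κ]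

lemma sum_pairing_smul_classFun {A : Type*} [AddCommMonoid A] [Module K A]
    {χ : Γ →+ AddChar Δ K} {N : κ → Finset Γ} {c : Γ → κ} (hc : ∀ i g, g ∈ N i ↔ c g = i)
    {P : κ → K} {h : Δ} (hP : ∀ i, ∑ g ∈ N i, χ g h = P i) (u : κ → A) :
    ∑ g, χ g h • u (c g) = ∑ i, P i • u i := by
  classical
  have filter_eq (i : κ) : Finset.univ.filter (c · = i) = N i := by ext; simp [hc]
  rw [← Finset.sum_fiberwise Finset.univ c]
  refine Finset.sum_congr rfl fun i _ ↦ ?_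
  rw [filter_eq, ← hP i, Finset.sum_smul]
  exact Finset.sum_congr rfl fun g hg ↦ by rw [(hc i g).mp hg]

lemma sum_smul_sum_C_mul_X [Fintype κ'] [DecidableEq κ'] {P : Matrix κ' κ K} {Q : Matrix κ κ' K}
    (hPQ : P * Q = 1) (k : κ') :
    ∑ i, P k i • ∑ j, C (Q i j) * X j = (X k : MvPolynomial κ' K) := by
  calc ∑ i, P k i • ∑ j, C (Q i j) * X j
      = ∑ j, (P * Q) k j • (X j : MvPolynomial κ' K) := by
        simp only [C_mul', Finset.smul_sum, smul_smul, Matrix.mul_apply, Finset.sum_smul]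
        exact Finset.sum_comm
    _ = X k := by simp [hPQ, Matrix.one_apply]

variable [Fintype Δ] [Fintype κ'] [DecidableEq κ'] {ι : Type*} [Fintype ι] [DecidableEq ι]

open Classical in
theorem macwilliams_translation_scheme_general {χ : Γ →+ AddChar Δ K} (hχ : Function.Injective χ)
    (hΔ : (Fintype.card Δ : K) ≠ 0)
    {N : κ → Finset Γ} (hNdisj : ∀ i j, i ≠ j → Disjoint (N i) (N j)) (hNcover : ∀ g, ∃ i, g ∈ N i)
    {M : κ' → Finset Δ} (hMdisj : ∀ i j, i ≠ j → Disjoint (M i) (M j)) (hMcover : ∀ h, ∃ j, h ∈ M j)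
    {P : Matrix κ' κ K} {Q : Matrix κ κ' K} (hPQ : P * Q = 1)
    (hP : ∀ j, ∀ h ∈ M j, ∀ i, ∑ g ∈ N i, χ g h = P j i) (C : AddSubgroup (ι → Γ)) :
    weightEnum K M {y | y ∈ annihilator (piPairing ι χ) C} =
      ((Fintype.card Δ : K) ^ Fintype.card ι / #{x | x ∈ C}) •
        aeval (fun i ↦ ∑ j, MvPolynomial.C (Q i j) * X j) (weightEnum K N {x | x ∈ C}) := by
  obtain ⟨c, hc⟩ := exists_classFun_of_partition hNdisj hNcover
  obtain ⟨c', hc'⟩ := exists_classFun_of_partition hMdisj hMcover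
  have hψ := piPairing_injective (ι := ι) hχ
  have hcard : (#{x | x ∈ C} : K) * #{y | y ∈ annihilator (piPairing ι χ) C} ≠ 0 := by
    rw [card_mul_card_annihilator hψ, Fintype.card_fun, Nat.cast_pow]
    exact pow_ne_zero _ hΔ
  obtain ⟨hC, hCdual⟩ := mul_ne_zero_iff.mp hcard
  let u (i : κ) : MvPolynomial κ' K := ∑ j, MvPolynomial.C (Q i j) * X j
  have X_eq (h : Δ) : X (c' h) = ∑ g, χ g h • u (c g) := by
    rw [sum_pairing_smul_classFun hc (hP (c' h) h ((hc' _ _).mpr rfl)) u, sum_smul_sum_C_mul_X hPQ]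
  rw [weightEnum_addSubgroup hc hC, weightEnum_addSubgroup hc' hCdual, div_eq_inv_mul, mul_smul,
    eq_inv_smul_iff₀ hC]
  simp only [map_sum, map_prod, aeval_X, X_eq, prod_sum_pairing_smul]
  rw [poisson_summation hψ, Fintype.card_fun, Nat.cast_pow]

end MacWilliams

/-- A symmetric bicharacter as a pairing of the group with itself. -/
def symmPairing {Γ M : Type*} [AddCommGroup Γ] [CommMonoid M] (χ : Γ → Γ → M)
    (hχadd : ∀ g h h', χ g (h + h') = χ g h * χ g h') (hχzero : ∀ g, χ g 0 = 1)
    (hχsymm : ∀ g h, χ g h = χ h g) : Γ →+ AddChar Γ M where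
  toFun g := ⟨χ g, hχzero g, hχadd g⟩
  map_zero' := by ext h; exact (hχsymm 0 h).trans (hχzero h)
  map_add' g g' := by
    ext h
    change χ (g + g') h = χ g h * χ g' h
    rw [hχsymm, hχadd, hχsymm h g, hχsymm h g']

lemma symmPairing_injective {Γ M : Type*} [AddCommGroup Γ] [CommMonoid M] {χ : Γ → Γ → M}
    (hχadd : ∀ g h h', χ g (h + h') = χ g h * χ g h') (hχzero : ∀ g, χ g 0 = 1)
    (hχsymm : ∀ g h, χ g h = χ h g) (hχnondeg : ∀ g, (∀ h, χ g h = 1) → g = 0) :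
    Function.Injective (symmPairing χ hχadd hχzero hχsymm) :=
  (injective_iff_map_eq_zero _).mpr fun g hg ↦ hχnondeg g (AddChar.eq_zero_iff.mp hg)

open Classical in
lemma exists_addSubgroup_filter_mem_eq {G : Type*} [AddCommGroup G] [Fintype G] {D : Finset G}
    (h0 : 0 ∈ D) (hsub : ∀ x ∈ D, ∀ y ∈ D, x - y ∈ D) :
    ∃ C : AddSubgroup G, ({x | x ∈ C} : Finset G) = D :=
  ⟨AddSubgroup.ofSub D ⟨0, h0⟩ (by simpa [← sub_eq_add_neg] using hsub), by
    ext; simp [← SetLike.mem_coe, AddSubgroup.ofSub]⟩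

lemma transWeightEnum_eq_weightEnum {Γ : Type} [AddCommGroup Γ] [Fintype Γ] {d : ℕ}
    (N : Fin (d + 1) → Finset Γ) (n : ℕ) (D : Finset (Fin n → Γ)) :
    transWeightEnum N n D = weightEnum ℂ N D :=
  rfl

open Classical in
lemma dualCode_addSubgroup {Γ : Type} [AddCommGroup Γ] [Fintype Γ] {χ : Γ → Γ → ℂ}
    (hχadd : ∀ g h h', χ g (h + h') = χ g h * χ g h') (hχzero : ∀ g, χ g 0 = 1)
    (hχsymm : ∀ g h, χ g h = χ h g) {n : ℕ} (C : AddSubgroup (Fin n → Γ)) :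
    dualCode χ n {x | x ∈ C} =
      univ.filter (· ∈ annihilator (piPairing (Fin n) (symmPairing χ hχadd hχzero hχsymm)) C) := by
  ext y
  simp only [dualCode, Finset.mem_filter_univ]
  rfl

/-- MacWilliams theorem for additive codes in translation schemes:
`W_{C⊥}(t) = (vⁿ/|C|) W_C(P⁻¹ t)`. -/
theorem macwilliams_translation_scheme {Γ : Type} [AddCommGroup Γ] [Fintype Γ]
    [DecidableEq Γ] {d : ℕ}
    (χ : Γ → Γ → ℂ)
    (hχadd : ∀ g h h', χ g (h + h') = χ g h * χ g h')
    (hχzero : ∀ g, χ g 0 = 1)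
    (hχsymm : ∀ g h, χ g h = χ h g)
    (hχnondeg : ∀ g, (∀ h, χ g h = 1) → g = 0)
    (N : Fin (d + 1) → Finset Γ)
    (hN0 : N 0 = {0})
    (hNdisj : ∀ i j, i ≠ j → Disjoint (N i) (N j))
    (hNcover : ∀ g, ∃ i, g ∈ N i)
    (S : AssocScheme d Γ)
    (hSA : ∀ i, S.A i = Matrix.of fun x y => if y - x ∈ N i then (1 : ℂ) else 0)
    (P : Matrix (Fin (d + 1)) (Fin (d + 1)) ℂ)
    (hPunit : IsUnit P.det)
    (hP : ∀ j, ∀ h ∈ N j, ∀ i, ∑ g ∈ N i, χ h g = P j i)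
    (n : ℕ) (hn : 1 ≤ n)
    (Cd : Finset (Fin n → Γ))
    (hC0 : (0 : Fin n → Γ) ∈ Cd)
    (hCsub : ∀ x ∈ Cd, ∀ y ∈ Cd, x - y ∈ Cd) :
    transWeightEnum N n (dualCode χ n Cd)
      = ((Fintype.card Γ : ℂ) ^ n / (Cd.card : ℂ)) •
          MvPolynomial.aeval
            (fun i => ∑ j : Fin (d + 1), MvPolynomial.C (P⁻¹ i j) * MvPolynomial.X j)
            (transWeightEnum N n Cd) := by
  obtain ⟨C, rfl⟩ := exists_addSubgroup_filter_mem_eq hC0 hCsub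
  have hPdual (j) (h) (hh : h ∈ N j) (i) : ∑ g ∈ N i, χ g h = P j i :=
    (Finset.sum_congr rfl fun g _ ↦ hχsymm g h).trans (hP j h hh i)
  simpa only [transWeightEnum_eq_weightEnum, dualCode_addSubgroup hχadd hχzero hχsymm,
    Fintype.card_fin] using macwilliams_translation_scheme_general
      (symmPairing_injective hχadd hχzero hχsymm hχnondeg)
      (Nat.cast_ne_zero.mpr Fintype.card_ne_zero) hNdisj hNcover hNdisj hNcover
      (P.mul_nonsing_inv hPunit) hPdual C
end

section
/- (MacWilliams identity for the Lee weight enumerator over ℤ/4.) Let n ≥ 1 and let C be a subgroup of (ℤ/4)^n. Then, as polynomials in two variables s, t, swe_{C⊥}(s², s·t, t²) = (1/|C|)·swe_C((s+t)², s² − t², (s−t)²); i.e., the Lee weight enumerators of C and C⊥ satisfy the binary MacWilliams transform even when C is not linear as a binary code. -/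
open Finset MvPolynomial

/-- `n_r(x)`: the number of coordinates of `x ∈ (ℤ/4)ⁿ` equal to `r` (mod 4). -/
def countCoord (n : ℕ) (x : Fin n → ZMod 4) (r : ℕ) : ℕ :=
  (Finset.univ.filter fun j => x j = (r : ZMod 4)).card

/-- The symmetrized weight enumerator
`swe_C(s,t,u) = Σ_{x ∈ C} s^{n₀} t^{n₁+n₃} u^{n₂}`, in the variables `X 0, X 1, X 2`. -/
noncomputable def swe (n : ℕ) (Cd : Finset (Fin n → ZMod 4)) : MvPolynomial (Fin 3) ℂ :=
  ∑ x ∈ Cd,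
    MvPolynomial.X 0 ^ countCoord n x 0 *
      MvPolynomial.X 1 ^ (countCoord n x 1 + countCoord n x 3) *
        MvPolynomial.X 2 ^ countCoord n x 2

/-- The dual code `C⊥ = {y : Σ_j x_j y_j = 0 in ℤ/4 for all x ∈ C}`. -/
def dualZ4Code (n : ℕ) (Cd : Finset (Fin n → ZMod 4)) : Finset (Fin n → ZMod 4) :=
  Finset.univ.filter fun y => ∀ x ∈ Cd, ∑ j, x j * y j = 0

/-!
The proof is Poisson summation. For a primitive character `ψ` of the ring of scalars, the
character `x ↦ ψ (x ⬝ y)` of a code `C` sums to `|C|` if `y ∈ C⊥` and to `0` otherwise. Hence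
`|C| · ∑_{y ∈ C⊥} F y` is the sum over `C` of the Fourier transform of `F`, and if `F` is a product
of one-coordinate weights, so is its transform. Over `ℤ/4`, with `ψ a = I ^ a`, the weights
`s, t, u, t` of `0, 1, 2, 3` are transformed to `s + 2t + u, s - u, s - 2t + u, s - u`; at
`(s², st, t²)` these are `(s + t)², s² - t², (s - t)², s² - t²`.
-/

section CharacterSums

theorem addChar_map_sum {ι G K : Type*} [AddCommMonoid G] [CommMonoid K] (ψ : AddChar G K)
    (s : Finset ι) (g : ι → G) : ψ (∑ i ∈ s, g i) = ∏ i ∈ s, ψ (g i) :=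
  map_prod ψ.toMonoidHom (fun i => Multiplicative.ofAdd (g i)) s

variable {R : Type*} [CommRing R]

theorem addChar_comp_linearMap_eq_zero_iff {K M : Type*} [CommMonoid K] [AddCommMonoid M]
    [Module R M] {ψ : AddChar R K} (hψ : ψ.IsPrimitive) (φ : M →ₗ[R] R) :
    ψ.compAddMonoidHom φ.toAddMonoidHom = 0 ↔ φ = 0 := by
  refine ⟨fun hψφ => LinearMap.ext fun x => ?_, fun hφ => by ext; simp [hφ]⟩
  by_contra hφx
  refine hψ hφx (DFunLike.ext _ _ fun r => ?_)
  have hψφ_smul : ψ (φ (r • x)) = 1 := DFunLike.congr_fun hψφ (r • x)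
  rwa [map_smul, smul_eq_mul, mul_comm] at hψφ_smul

variable {K : Type*} [CommSemiring K] [IsDomain K] {ψ : AddChar R K}

theorem sum_addChar_linearMap {M : Type*} [AddCommGroup M] [Module R M] [Fintype M]
    (hψ : ψ.IsPrimitive) (φ : M →ₗ[R] R) [Decidable (φ = 0)] :
    ∑ x, ψ (φ x) = if φ = 0 then (Fintype.card M : K) else 0 := by
  classical
  simpa only [addChar_comp_linearMap_eq_zero_iff hψ] using!
    (ψ.compAddMonoidHom φ.toAddMonoidHom).sum_eq_ite

variable {ι : Type*} [Fintype ι]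

theorem sum_addChar_sum_mul (hψ : ψ.IsPrimitive) (C : Submodule R (ι → R)) [Fintype C]
    (y : ι → R) [Decidable (∀ x ∈ C, ∑ j, x j * y j = 0)] :
    ∑ x : C, ψ (∑ j, x.1 j * y j) =
      if ∀ x ∈ C, ∑ j, x j * y j = 0 then (Fintype.card C : K) else 0 := by
  classical
  let pairing : C →ₗ[R] R := Fintype.linearCombination R y ∘ₗ C.subtype
  have pairing_eq_zero_iff : pairing = 0 ↔ ∀ x ∈ C, ∑ j, x j * y j = 0 := by
    simp [pairing, LinearMap.ext_iff, Fintype.linearCombination_apply]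
  simpa only [pairing_eq_zero_iff] using! sum_addChar_linearMap hψ pairing

theorem macwilliams_card_smul_sum_dual_prod {A : Type*} [CommSemiring A] [Algebra K A] [Fintype R]
    [DecidableEq ι] (hψ : ψ.IsPrimitive) (C : Submodule R (ι → R)) [Fintype C]
    [DecidablePred fun y : ι → R => ∀ x ∈ C, ∑ j, x j * y j = 0] (w : ι → R → A) :
    (Fintype.card C : K) • ∑ y : ι → R with ∀ x ∈ C, ∑ j, x j * y j = 0, ∏ j, w j (y j) =
      ∑ x : C, ∏ j, ∑ a, ψ (x.1 j * a) • w j a := by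
  calc
    _ = ∑ y : ι → R, (∑ x : C, ψ (∑ j, x.1 j * y j)) • ∏ j, w j (y j) := by
      simp only [sum_addChar_sum_mul hψ, ite_smul, zero_smul, sum_filter, smul_sum, smul_ite,
        smul_zero]
    _ = ∑ x : C, ∑ y : ι → R, ∏ j, ψ (x.1 j * y j) • w j (y j) := by
      simp only [sum_smul, addChar_map_sum, prod_smul]
      exact sum_comm
    _ = ∑ x : C, ∏ j, ∑ a, ψ (x.1 j * a) • w j a := by
      simp only [prod_univ_sum, Fintype.piFinset_univ]

end CharacterSums

section SymmetrizedWeight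

variable {A : Type*}

/-- The weight of a single coordinate in the symmetrized weight enumerator, with values `s, t, u, t`
at `0, 1, 2, 3`; it relies on `ZMod 4` being `Fin 4` by definition. -/
def sweWeight (s t u : A) : ZMod 4 → A :=
  ![s, t, u, t]

variable [CommRing A] [Algebra ℂ A]

theorem aeval_swe (s t u : A) (n : ℕ) (D : Finset (Fin n → ZMod 4)) :
    aeval ![s, t, u] (swe n D) = ∑ x ∈ D, ∏ j, sweWeight s t u (x j) := by
  simp only [swe, map_sum, map_mul, map_pow, aeval_X]
  refine sum_congr rfl fun x _ => ?_
  have prod_eq : ∏ j, sweWeight s t u (x j) =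
      s ^ countCoord n x 0 * t ^ countCoord n x 1 * u ^ countCoord n x 2 *
        t ^ countCoord n x 3 := by
    rw [← prod_fiberwise' univ x (sweWeight s t u)]
    simp only [prod_const]
    exact Fin.prod_univ_four _
  rw [prod_eq]
  simp only [Matrix.cons_val]
  ring

theorem sum_I_pow_smul_sweWeight (s t u : A) (b : ZMod 4) :
    ∑ a : ZMod 4, Complex.I ^ (b * a).val • sweWeight s t u a =
      sweWeight (s + 2 * t + u) (s - u) (s - 2 * t + u) b := by
  have sum_eq : ∑ a : ZMod 4, Complex.I ^ (b * a).val • sweWeight s t u a =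
      Complex.I ^ (b * 0).val • s + Complex.I ^ (b * 1).val • t +
        Complex.I ^ (b * 2).val • u + Complex.I ^ (b * 3).val • t :=
    Fin.sum_univ_four _
  rw [sum_eq]
  match b with
  | 0 =>
    change Complex.I ^ 0 • s + Complex.I ^ 0 • t + Complex.I ^ 0 • u + Complex.I ^ 0 • t =
      s + 2 * t + u
    simp only [pow_zero, one_smul]
    ring
  | 1 =>
    change Complex.I ^ 0 • s + Complex.I ^ 1 • t + Complex.I ^ 2 • u + Complex.I ^ 3 • t = s - u
    simp only [pow_zero, pow_one, Complex.I_sq, Complex.I_pow_three]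
    module
  | 2 =>
    change Complex.I ^ 0 • s + Complex.I ^ 2 • t + Complex.I ^ 0 • u + Complex.I ^ 2 • t =
      s - 2 * t + u
    simp only [pow_zero, Complex.I_sq, neg_smul, one_smul]
    ring
  | 3 =>
    change Complex.I ^ 0 • s + Complex.I ^ 3 • t + Complex.I ^ 2 • u + Complex.I ^ 1 • t = s - u
    simp only [pow_zero, pow_one, Complex.I_sq, Complex.I_pow_three]
    module

theorem macwilliams_card_smul_aeval_swe (s t u : A) (n : ℕ) (Cd : Finset (Fin n → ZMod 4))
    (hC0 : 0 ∈ Cd) (hCsub : ∀ x ∈ Cd, ∀ y ∈ Cd, x - y ∈ Cd) :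
    (Cd.card : ℂ) • aeval ![s, t, u] (swe n (dualZ4Code n Cd)) =
      aeval ![s + 2 * t + u, s - u, s - 2 * t + u] (swe n Cd) := by
  classical
  let C : Submodule (ZMod 4) (Fin n → ZMod 4) := AddSubgroup.toZModSubmodule 4 <|
    AddSubgroup.ofSub Cd ⟨0, hC0⟩ fun x hx y hy => by simpa [sub_eq_add_neg] using hCsub x hx y hy
  have mem_C (x : Fin n → ZMod 4) : x ∈ Cd ↔ x ∈ C := Iff.rfl
  have hψ := AddChar.zmodChar_primitive_of_primitive_root 4 Complex.isPrimitiveRoot_I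
  calc
    _ = (Fintype.card C : ℂ) •
          ∑ y : Fin n → ZMod 4 with ∀ x ∈ C, ∑ j, x j * y j = 0, ∏ j, sweWeight s t u (y j) := by
      simp only [aeval_swe, dualZ4Code, Fintype.card_of_subtype Cd mem_C, mem_C]
    _ = ∑ x : C, ∏ j, ∑ a : ZMod 4, Complex.I ^ (x.1 j * a).val • sweWeight s t u a :=
      macwilliams_card_smul_sum_dual_prod hψ C fun _ => sweWeight s t u
    _ = _ := by
      simp only [sum_I_pow_smul_sweWeight, aeval_swe, sum_subtype Cd mem_C]

end SymmetrizedWeight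

/-- MacWilliams identity for the Lee weight enumerator over `ℤ/4`:
`swe_{C⊥}(s², st, t²) = |C|⁻¹ swe_C((s+t)², s²-t², (s-t)²)`, i.e. the Lee weight
enumerators of `C` and `C⊥` satisfy the binary MacWilliams transform. -/
theorem macwilliams_lee_z4 (n : ℕ) (hn : 1 ≤ n)
    (Cd : Finset (Fin n → ZMod 4))
    (hC0 : (0 : Fin n → ZMod 4) ∈ Cd)
    (hCsub : ∀ x ∈ Cd, ∀ y ∈ Cd, x - y ∈ Cd) :
    MvPolynomial.aeval
        ![(MvPolynomial.X 0 : MvPolynomial (Fin 2) ℂ) ^ 2, MvPolynomial.X 0 * MvPolynomial.X 1, MvPolynomial.X 1 ^ 2]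
        (swe n (dualZ4Code n Cd))
      = (Cd.card : ℂ)⁻¹ •
          MvPolynomial.aeval
            ![((MvPolynomial.X 0 : MvPolynomial (Fin 2) ℂ) + MvPolynomial.X 1) ^ 2,
              MvPolynomial.X 0 ^ 2 - MvPolynomial.X 1 ^ 2,
              (MvPolynomial.X 0 - MvPolynomial.X 1) ^ 2]
            (swe n Cd) := by
  rw [eq_inv_smul_iff₀ (Nat.cast_ne_zero.2 (card_ne_zero_of_mem hC0)),
    macwilliams_card_smul_aeval_swe _ _ _ n Cd hC0 hCsub]
  simp only [add_sq, sub_sq, mul_assoc]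
end

section
/- (Modular invariance is inherited by symmetric powers.) Let d ≥ 0, n ≥ 1, let P be a (d+1)×(d+1) complex matrix, T a diagonal (d+1)×(d+1) complex matrix, and c ∈ ℂ with (P·T)³ = c·I. For a (d+1)×(d+1) matrix M, let M̂ be the matrix with rows and columns indexed by vectors α of d+1 nonnegative integers summing to n, whose (β,α)-entry is the coefficient of s^α in (Ms)^β = Π_{j=0}^{d} (Σ_{i=0}^{d} M_{j,i}·s_i)^{β(j)}. Then T̂ is diagonal and (P̂·T̂)³ = c^n·I. -/
open Matrix Finset MvPolynomial

/-- `M̂`: the matrix of the induced action of `M` on homogeneous polynomials of degree `n`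
in `s_0, …, s_d`; its `(β,α)`-entry is the coefficient of `s^α` in `(Ms)^β`. -/
noncomputable def hatMat (d n : ℕ) (M : Matrix (Fin (d + 1)) (Fin (d + 1)) ℂ) :
    Matrix {α : Fin (d + 1) → ℕ // α ∈ Finset.Nat.antidiagonalTuple (d + 1) n}
      {α : Fin (d + 1) → ℕ // α ∈ Finset.Nat.antidiagonalTuple (d + 1) n} ℂ :=
  Matrix.of fun β α =>
    MvPolynomial.coeff (Finsupp.equivFunOnFinite.symm α.1)
      (∏ j : Fin (d + 1),
        (∑ i : Fin (d + 1), MvPolynomial.C (M j i) * MvPolynomial.X i) ^ β.1 j)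

/-!
`M̂` is the matrix, in the monomial basis, of the substitution `s ↦ M s` on forms of degree `n`.
Composing substitutions multiplies matrices, so `M ↦ M̂` is multiplicative and
`(P̂ T̂)³` is the hat of `(P T)³`. A diagonal substitution `s_i ↦ t_i s_i` multiplies `s^β`
by `t^β`; hence the hat of a diagonal matrix is diagonal, and that of `c I` is `cⁿ I`.
-/

section Homogeneous

variable {σ R : Type*} [Fintype σ] [DecidableEq σ] [CommSemiring R] {n : ℕ}

/-- The exponents of the monomials of degree `n` in the variables `σ`, encoded as finitely
supported functions so that they can serve as arguments of `MvPolynomial.coeff`. -/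
abbrev MonomialExponent (σ : Type*) [Fintype σ] [DecidableEq σ] (n : ℕ) : Type _ :=
  {α : σ →₀ ℕ // α ∈ finsuppAntidiag univ n}

theorem mem_finsuppAntidiag_univ_iff_degree_eq {α : σ →₀ ℕ} :
    α ∈ finsuppAntidiag univ n ↔ α.degree = n := by
  simp [Finsupp.degree_eq_sum]

theorem MonomialExponent.degree_eq (α : MonomialExponent σ n) : α.1.degree = n :=
  mem_finsuppAntidiag_univ_iff_degree_eq.mp α.2

theorem sum_monomial_coeff_of_isHomogeneous {p : MvPolynomial σ R} (hp : p.IsHomogeneous n) :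
    ∑ α : MonomialExponent σ n, monomial α.1 (coeff α.1 p) = p := by
  have support_subset : p.support ⊆ finsuppAntidiag univ n := fun α hα =>
    mem_finsuppAntidiag_univ_iff_degree_eq.mpr <|
      of_not_not fun hdeg => mem_support_iff.mp hα (hp.coeff_eq_zero hdeg)
  calc ∑ α : MonomialExponent σ n, monomial α.1 (coeff α.1 p)
      = ∑ α ∈ finsuppAntidiag univ n, monomial α (coeff α p) :=
        sum_coe_sort _ fun α => monomial α (coeff α p)
    _ = ∑ α ∈ p.support, monomial α (coeff α p) :=
        (sum_subset support_subset fun α _ hα => by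
          rw [notMem_support_iff.mp hα, monomial_zero]).symm
    _ = p := p.support_sum_monomial_coeff

end Homogeneous

section LinearSubstitution

variable {σ τ υ R : Type*} [Fintype τ] [Fintype υ] [CommSemiring R]

theorem bind₁_toMvPolynomial_mul (M : Matrix σ τ R) (N : Matrix τ υ R) (p : MvPolynomial σ R) :
    bind₁ (M * N).toMvPolynomial p = bind₁ N.toMvPolynomial (bind₁ M.toMvPolynomial p) := by
  rw [bind₁_bind₁, funext (Matrix.toMvPolynomial_mul M N)]

theorem isHomogeneous_bind₁_toMvPolynomial (M : Matrix σ τ R) {n : ℕ} {p : MvPolynomial σ R}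
    (hp : p.IsHomogeneous n) : (bind₁ M.toMvPolynomial p).IsHomogeneous n := by
  rw [← one_mul n]
  exact hp.aeval M.toMvPolynomial M.toMvPolynomial_isHomogeneous

theorem toMvPolynomial_diagonal [DecidableEq τ] (t : τ → R) (i : τ) :
    (diagonal t).toMvPolynomial i = C (t i) * X i := by
  rw [Matrix.toMvPolynomial, Fintype.sum_eq_single i, diagonal_apply_eq, C_mul_X_eq_monomial]
  intro j hj
  rw [diagonal_apply_ne' t hj, monomial_zero]

theorem bind₁_toMvPolynomial_diagonal_monomial [DecidableEq τ] (t : τ → R) (β : τ →₀ ℕ) :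
    bind₁ (diagonal t).toMvPolynomial (monomial β 1) = monomial β (∏ i, t i ^ β i) := by
  rw [bind₁_monomial, monomial_eq, Finsupp.prod_fintype β _ fun _ => pow_zero _,
    ← Finsupp.prod, Finsupp.prod_fintype β _ fun _ => pow_zero _]
  simp only [toMvPolynomial_diagonal, mul_pow, prod_mul_distrib, map_prod, map_pow, map_one,
    one_mul]

end LinearSubstitution

section SymPowMatrix

variable {σ τ υ R : Type*} [Fintype σ] [Fintype τ] [Fintype υ] [DecidableEq σ] [DecidableEq τ]
  [DecidableEq υ] [CommSemiring R]

/-- The `n`-th symmetric power of a matrix `M`: the matrix, in the monomial bases, of the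
substitution `s_j ↦ ∑ i, M j i * s_i` on homogeneous polynomials of degree `n`. As for `hatMat`,
the image of the monomial `s^β` is recorded in the *row* `β`. -/
noncomputable def symPowMatrix (n : ℕ) (M : Matrix σ τ R) :
    Matrix (MonomialExponent σ n) (MonomialExponent τ n) R :=
  Matrix.of fun β α => coeff α.1 (bind₁ M.toMvPolynomial (monomial β.1 1))

theorem symPowMatrix_apply (n : ℕ) (M : Matrix σ τ R) (β : MonomialExponent σ n)
    (α : MonomialExponent τ n) :
    symPowMatrix n M β α = coeff α.1 (bind₁ M.toMvPolynomial (monomial β.1 1)) :=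
  rfl

theorem sum_symPowMatrix_smul_monomial (n : ℕ) (M : Matrix σ τ R) (β : MonomialExponent σ n) :
    ∑ γ, symPowMatrix n M β γ • monomial γ.1 1 = bind₁ M.toMvPolynomial (monomial β.1 1) := by
  have homogeneous := isHomogeneous_bind₁_toMvPolynomial M
    (isHomogeneous_monomial (1 : R) β.degree_eq)
  simpa only [smul_monomial, smul_eq_mul, mul_one, symPowMatrix_apply]
    using sum_monomial_coeff_of_isHomogeneous homogeneous

theorem symPowMatrix_mul (n : ℕ) (M : Matrix σ τ R) (N : Matrix τ υ R) :
    symPowMatrix n (M * N) = symPowMatrix n M * symPowMatrix n N := by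
  ext β α
  rw [symPowMatrix_apply, bind₁_toMvPolynomial_mul, ← sum_symPowMatrix_smul_monomial n M β,
    map_sum, coeff_sum, Matrix.mul_apply]
  simp only [map_smul, coeff_smul, smul_eq_mul, symPowMatrix_apply n N]

theorem symPowMatrix_diagonal (n : ℕ) (t : σ → R) :
    symPowMatrix n (diagonal t) = diagonal fun β => ∏ i, t i ^ β.1 i := by
  ext β α
  rw [symPowMatrix_apply, bind₁_toMvPolynomial_diagonal_monomial, coeff_monomial, diagonal_apply]
  simp only [Subtype.ext_iff]

theorem isDiag_symPowMatrix (n : ℕ) {T : Matrix σ σ R} (hT : T.IsDiag) :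
    (symPowMatrix n T).IsDiag := by
  rw [← hT.diagonal_diag, symPowMatrix_diagonal]
  exact isDiag_diagonal _

theorem symPowMatrix_smul_one (n : ℕ) (c : R) :
    symPowMatrix n (c • (1 : Matrix σ σ R)) = c ^ n • 1 := by
  simp only [smul_one_eq_diagonal, symPowMatrix_diagonal, prod_pow_eq_pow_sum,
    ← Finsupp.degree_eq_sum, MonomialExponent.degree_eq]

theorem symPowMatrix_one (n : ℕ) : symPowMatrix n (1 : Matrix σ σ R) = 1 := by
  simpa only [one_smul, one_pow] using symPowMatrix_smul_one (σ := σ) n (1 : R)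

theorem symPowMatrix_pow (n : ℕ) (M : Matrix σ σ R) (k : ℕ) :
    symPowMatrix n (M ^ k) = symPowMatrix n M ^ k := by
  induction k with
  | zero => rw [pow_zero, pow_zero, symPowMatrix_one]
  | succ k ih => rw [pow_succ, pow_succ, symPowMatrix_mul, ih]

theorem modular_invariance_hat_general (n k : ℕ) {P T : Matrix σ σ R} {c : R} (hT : T.IsDiag)
    (hPT : (P * T) ^ k = c • (1 : Matrix σ σ R)) :
    (symPowMatrix n T).IsDiag ∧ (symPowMatrix n P * symPowMatrix n T) ^ k = c ^ n • 1 := by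
  refine ⟨isDiag_symPowMatrix n hT, ?_⟩
  rw [← symPowMatrix_mul, ← symPowMatrix_pow, hPT, symPowMatrix_smul_one]

end SymPowMatrix

/-- The identification of the exponents indexing `symPowMatrix` with those indexing `hatMat`,
forgetting that a function on `Fin k` is finitely supported. -/
noncomputable def monomialExponentEquivAntidiagonalTuple (k n : ℕ) :
    MonomialExponent (Fin k) n ≃ {α : Fin k → ℕ // α ∈ Finset.Nat.antidiagonalTuple k n} :=
  Finsupp.equivFunOnFinite.subtypeEquiv fun α => by
    rw [mem_finsuppAntidiag_univ_iff_degree_eq, Finset.Nat.mem_antidiagonalTuple,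
      Finsupp.degree_eq_sum]
    rfl

theorem hatMat_eq_reindex_symPowMatrix (d n : ℕ) (M : Matrix (Fin (d + 1)) (Fin (d + 1)) ℂ) :
    hatMat d n M = reindexAlgEquiv ℂ ℂ (monomialExponentEquivAntidiagonalTuple (d + 1) n)
      (symPowMatrix n M) := by
  ext β α
  change _ = coeff (Finsupp.equivFunOnFinite.symm α.1)
    (bind₁ M.toMvPolynomial (monomial (Finsupp.equivFunOnFinite.symm β.1) 1))
  rw [bind₁_monomial, ← Finsupp.prod, Finsupp.prod_fintype _ _ fun _ => pow_zero _, C_1, one_mul]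
  simp only [hatMat, Matrix.of_apply, Matrix.toMvPolynomial, C_mul_X_eq_monomial,
    Finsupp.equivFunOnFinite_symm_apply_apply]

/-- modular invariance is inherited by symmetric powers:
if `T` is diagonal and `(PT)³ = cI`, then `T̂` is diagonal and `(P̂ T̂)³ = cⁿ I`. -/
theorem modular_invariance_hat (d n : ℕ) (hn : 1 ≤ n)
    (P T : Matrix (Fin (d + 1)) (Fin (d + 1)) ℂ) (c : ℂ)
    (hT : T.IsDiag) (hPT : (P * T) ^ 3 = c • (1 : Matrix (Fin (d + 1)) (Fin (d + 1)) ℂ)) :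
    (hatMat d n T).IsDiag ∧
      (hatMat d n P * hatMat d n T) ^ 3 = c ^ n • 1 := by
  obtain ⟨isDiag, pow_eq⟩ := modular_invariance_hat_general n 3 hT hPT
  simp only [hatMat_eq_reindex_symPowMatrix, ← map_mul, ← map_pow, pow_eq, map_smul, map_one,
    and_true]
  exact isDiag.submatrix (Equiv.injective _)
end
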